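/- Let H be a Berge-K4-saturated 3-uniform hypergraph on n ≥ 7 vertices with the minimum number of hyperedges. Then the minimum degree of H is at least 2. -/

import Mathlib

variable {V : Type*} [DecidableEq V]

/-- A Berge-K4 in the hyperedge set `E` with core vertices `a,b,c,d`:
four distinct vertices together with six distinct hyperedges, one assigned
to each pair of core vertices, each containing its assigned pair. -/
def IsBergeK4Core (E : Finset (Finset V)) (a b c d : V) : Prop :=
  a ≠ b ∧ a ≠ c ∧ a ≠ d ∧ b ≠ c ∧ b ≠ d ∧ c ≠ d ∧
  ∃ fab fac fad fbc fbd fcd : Finset V,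
    fab ∈ E ∧ fac ∈ E ∧ fad ∈ E ∧ fbc ∈ E ∧ fbd ∈ E ∧ fcd ∈ E ∧
    ([fab, fac, fad, fbc, fbd, fcd] : List (Finset V)).Nodup ∧
    a ∈ fab ∧ b ∈ fab ∧ a ∈ fac ∧ c ∈ fac ∧ a ∈ fad ∧ d ∈ fad ∧
    b ∈ fbc ∧ c ∈ fbc ∧ b ∈ fbd ∧ d ∈ fbd ∧ c ∈ fcd ∧ d ∈ fcd

/-- `E` contains a Berge-K4. -/
def IsBergeK4 (E : Finset (Finset V)) : Prop :=
  ∃ a b c d : V, IsBergeK4Core E a b c d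

/-- Every hyperedge has exactly 3 vertices. -/
def Is3Uniform (E : Finset (Finset V)) : Prop := ∀ e ∈ E, e.card = 3

/-- The degree of a vertex: the number of hyperedges containing it. -/
def hdeg (E : Finset (Finset V)) (v : V) : ℕ := (E.filter fun e => v ∈ e).card

/-- A 3-uniform Berge-K4-saturated hypergraph on the (finite) vertex type `V`:
it is 3-uniform, Berge-K4-free, and adding any non-hyperedge (3-element subset
of the vertices not already a hyperedge) creates a Berge-K4. -/
def IsSaturated [Fintype V] (E : Finset (Finset V)) : Prop :=
  Is3Uniform E ∧ ¬ IsBergeK4 E ∧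
    ∀ e : Finset V, e.card = 3 → e ∉ E → IsBergeK4 (insert e E)

/-- The pair `(u,v)` is good: there are two further vertices `x,y` (so that
`u,v,x,y` are four distinct vertices) and five distinct hyperedges, one for
each pair among `u,v,x,y` other than `uv`, each containing its assigned pair;
i.e. adding an edge on `{u,v}` completes a Berge-K4 with core `{u,v,x,y}`. -/
def GoodPair (E : Finset (Finset V)) (u v : V) : Prop :=
  ∃ x y : V, u ≠ v ∧ u ≠ x ∧ u ≠ y ∧ v ≠ x ∧ v ≠ y ∧ x ≠ y ∧
  ∃ eux euy evx evy exy : Finset V,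
    eux ∈ E ∧ euy ∈ E ∧ evx ∈ E ∧ evy ∈ E ∧ exy ∈ E ∧
    ([eux, euy, evx, evy, exy] : List (Finset V)).Nodup ∧
    u ∈ eux ∧ x ∈ eux ∧ u ∈ euy ∧ y ∈ euy ∧
    v ∈ evx ∧ x ∈ evx ∧ v ∈ evy ∧ y ∈ evy ∧
    x ∈ exy ∧ y ∈ exy

set_option linter.unusedSectionVars false

/-- Three distinct vertices spanning a hyperedge of `E`. -/
def Tri (E : Finset (Finset V)) (a b c : V) : Prop :=
  a ≠ b ∧ a ≠ c ∧ b ≠ c ∧ ({a, b, c} : Finset V) ∈ E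

/-- Distinct hyperedges `p, q, r, s, t` covering the pairs `ux, uy, wx, wy, xy`, so that only the
pair `uw` is missing for a Berge-K4 with core `u, w, x, y`. -/
structure Five (E : Finset (Finset V)) (u w x y : V) (p q r s t : Finset V) : Prop where
  ne : u ≠ w ∧ u ≠ x ∧ u ≠ y ∧ w ≠ x ∧ w ≠ y ∧ x ≠ y
  mem : p ∈ E ∧ q ∈ E ∧ r ∈ E ∧ s ∈ E ∧ t ∈ E
  nodup : ([p, q, r, s, t] : List (Finset V)).Nodup
  inc : u ∈ p ∧ x ∈ p ∧ u ∈ q ∧ y ∈ q ∧ w ∈ r ∧ x ∈ r ∧ w ∈ s ∧ y ∈ s ∧ x ∈ t ∧ y ∈ t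

/-- A Berge-K4-free hypergraph with a vertex `v` of degree at most one such that every pair of
other vertices which does not form a hyperedge together with `v` is good. -/
structure LowDegree (E : Finset (Finset V)) (v : V) : Prop where
  uniform : Is3Uniform E
  free : ¬ IsBergeK4 E
  low : ∀ e ∈ E, ∀ f ∈ E, v ∈ e → v ∈ f → e = f
  good : ∀ x y, x ≠ v → y ≠ v → x ≠ y → ({v, x, y} : Finset V) ∉ E → GoodPair E x y

/-- A pair of vertices different from `v` that does not form a hyperedge with `v`. -/
def Nice (E : Finset (Finset V)) (v x y : V) : Prop :=
  x ≠ v ∧ y ≠ v ∧ x ≠ y ∧ ({v, x, y} : Finset V) ∉ E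

section Basic

variable {E : Finset (Finset V)} {u v w x y z a b c d : V} {p q r s t f : Finset V}

theorem Tri.swap (h : Tri E a b c) : Tri E b a c := by
  obtain ⟨h1, h2, h3, h4⟩ := h
  exact ⟨h1.symm, h3, h2, by rwa [Finset.insert_comm]⟩

theorem Tri.swap' (h : Tri E a b c) : Tri E a c b := by
  obtain ⟨h1, h2, h3, h4⟩ := h
  exact ⟨h2, h1, h3.symm, by rwa [Finset.pair_comm]⟩

theorem Nice.symm (h : Nice E v x y) : Nice E v y x := by
  obtain ⟨h1, h2, h3, h4⟩ := h
  exact ⟨h2, h1, h3.symm, by rwa [Finset.pair_comm]⟩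

theorem eq_triple (he : f.card = 3) (ha : a ∈ f) (hb : b ∈ f) (hc : c ∈ f)
    (hab : a ≠ b) (hac : a ≠ c) (hbc : b ≠ c) : f = {a, b, c} := by
  symm
  apply Finset.eq_of_subset_of_card_le
  · intro x hx
    simp only [Finset.mem_insert, Finset.mem_singleton] at hx
    rcases hx with rfl | rfl | rfl <;> assumption
  · rw [he, Finset.card_eq_three.2 ⟨a, b, c, hab, hac, hbc, rfl⟩]

theorem exists_tri (hE : Is3Uniform E) (hf : f ∈ E) (ha : a ∈ f) (hb : b ∈ f) (hab : a ≠ b) :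
    ∃ c, Tri E a b c ∧ f = {a, b, c} := by
  have h3 := hE f hf
  obtain ⟨c, hc, hca, hcb⟩ : ∃ c ∈ f, c ≠ a ∧ c ≠ b := by
    by_contra! hcon
    have hsub : f ⊆ {a, b} := by
      intro x hx
      have := hcon x hx
      simp only [Finset.mem_insert, Finset.mem_singleton]
      tauto
    have := Finset.card_le_card hsub
    have := Finset.card_le_two (a := a) (b := b)
    omega
  have he := eq_triple h3 ha hb hc hab hca.symm hcb.symm
  exact ⟨c, ⟨hab, hca.symm, hcb.symm, he ▸ hf⟩, he⟩

theorem Five.distinct (h : Five E u w x y p q r s t) :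
    p ≠ q ∧ p ≠ r ∧ p ≠ s ∧ p ≠ t ∧ q ≠ r ∧ q ≠ s ∧ q ≠ t ∧ r ≠ s ∧ r ≠ t ∧ s ≠ t := by
  have h3 := h.nodup
  simp only [List.nodup_cons, List.mem_cons, List.not_mem_nil, or_false, not_or] at h3
  tauto

theorem Five.swap_right (h : Five E u w x y p q r s t) : Five E u w y x q p s r t := by
  obtain ⟨h1, h2, h3, h4⟩ := h
  refine ⟨by grind, by grind, ?_, by grind⟩
  simp only [List.nodup_cons, List.mem_cons, List.not_mem_nil, or_false, not_or] at h3 ⊢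
  grind

theorem Five.swap_left (h : Five E u w x y p q r s t) : Five E w u x y r s p q t := by
  obtain ⟨h1, h2, h3, h4⟩ := h
  refine ⟨by grind, by grind, ?_, by grind⟩
  simp only [List.nodup_cons, List.mem_cons, List.not_mem_nil, or_false, not_or] at h3 ⊢
  grind

/-- If the hyperedge of `ux` also contains `w`, it may be used for `uw` instead, which leaves
the pair `ux` missing. -/
theorem Five.rotate (h : Five E u w x y p q r s t) (hw : w ∈ p) :
    Five E u x w y p q r t s := by
  obtain ⟨h1, h2, h3, h4⟩ := h
  refine ⟨by grind, by grind, ?_, by grind⟩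
  simp only [List.nodup_cons, List.mem_cons, List.not_mem_nil, or_false, not_or] at h3 ⊢
  grind

theorem Five.mem_list (hfree : ¬ IsBergeK4 E) (h : Five E u w x y p q r s t) (hf : f ∈ E)
    (hu : u ∈ f) (hw : w ∈ f) : f ∈ [p, q, r, s, t] := by
  by_contra hcon
  obtain ⟨h1, h2, h3, h4⟩ := h
  exact hfree ⟨u, w, x, y, by tauto, by tauto, by tauto, by tauto, by tauto, by tauto,
    f, p, q, r, s, t, by tauto, by tauto, by tauto, by tauto, by tauto, by tauto,
    List.nodup_cons.2 ⟨hcon, h3⟩, by tauto, by tauto, by tauto, by tauto, by tauto, by tauto,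
    by tauto, by tauto, by tauto, by tauto, by tauto, by tauto⟩

theorem card_four_le (ha : a ∈ f) (hb : b ∈ f) (hc : c ∈ f) (hd : d ∈ f) (hab : a ≠ b)
    (hac : a ≠ c) (had : a ≠ d) (hbc : b ≠ c) (hbd : b ≠ d) (hcd : c ≠ d) : 4 ≤ f.card := by
  have hsub : ({a, b, c, d} : Finset V) ⊆ f := by
    intro x hx
    simp only [Finset.mem_insert, Finset.mem_singleton] at hx
    rcases hx with rfl | rfl | rfl | rfl <;> assumption
  have h4 : ({a, b, c, d} : Finset V).card = 4 := by
    rw [Finset.card_eq_succ]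
    exact ⟨a, {b, c, d}, by simp [hab, hac, had], rfl,
      Finset.card_eq_three.2 ⟨b, c, d, hbc, hbd, hcd, rfl⟩⟩
  exact h4 ▸ Finset.card_le_card hsub

theorem Five.mem_four (hE : Is3Uniform E) (hfree : ¬ IsBergeK4 E)
    (h : Five E u w x y p q r s t) (hf : f ∈ E)
    (hu : u ∈ f) (hw : w ∈ f) : f = p ∨ f = q ∨ f = r ∨ f = s := by
  have h1 := h.mem_list hfree hf hu hw
  simp only [List.mem_cons, List.not_mem_nil, or_false] at h1
  rcases h1 with h1 | h1 | h1 | h1 | h1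
  · tauto
  · tauto
  · tauto
  · tauto
  · obtain ⟨h2, h3, h4, h5⟩ := h
    subst h1
    have := card_four_le hu hw (by tauto : x ∈ f) (by tauto : y ∈ f) (by tauto) (by tauto)
      (by tauto) (by tauto) (by tauto) (by tauto)
    have := hE f hf
    omega

theorem Five.eq_of_tri (hE : Is3Uniform E) (hfree : ¬ IsBergeK4 E)
    (h : Five E u w x y p q r s t) (hz : Tri E u w z) : z = x ∨ z = y := by
  have h1 := h.mem_four hE hfree hz.2.2.2 (by simp) (by simp)
  obtain ⟨h2, h3, h4, h5⟩ := h
  have hx : x ∈ ({u, w, z} : Finset V) ∨ y ∈ ({u, w, z} : Finset V) := by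
    rcases h1 with h1 | h1 | h1 | h1 <;> rw [h1] <;> tauto
  simp only [Finset.mem_insert, Finset.mem_singleton] at hx
  grind

end Basic

section Local

variable {E : Finset (Finset V)} {u v w x y z a b c d : V} {p q r s t f : Finset V}

theorem Tri.ne (h : Tri E a b c) : a ≠ b ∧ a ≠ c ∧ b ≠ c := ⟨h.1, h.2.1, h.2.2.1⟩

theorem Nice.ne (h : Nice E v a b) : a ≠ v ∧ b ≠ v ∧ a ≠ b := ⟨h.1, h.2.1, h.2.2.1⟩

theorem Tri.ne_of_nice (h : Nice E v a b) (ht : Tri E a b c) : c ≠ v := by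
  rintro rfl
  exact h.2.2.2 ht.swap'.swap.2.2.2

theorem Tri.nice_of_special (hL : LowDegree E v) (hs : Tri E v a b) (hx : x ≠ v) (hy : y ≠ v)
    (hxy : x ≠ y) (hne : ¬ (x = a ∧ y = b ∨ x = b ∧ y = a)) : Nice E v x y := by
  refine ⟨hx, hy, hxy, fun hcon => hne ?_⟩
  have h1 := hL.low _ hcon _ hs.2.2.2 (by simp) (by simp)
  have h2 : x ∈ ({v, a, b} : Finset V) := by rw [← h1]; simp
  have h3 : y ∈ ({v, a, b} : Finset V) := by rw [← h1]; simp
  simp only [Finset.mem_insert, Finset.mem_singleton] at h2 h3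
  grind

theorem nice_or_special (hx : x ≠ v) (hy : y ≠ v) (hxy : x ≠ y) :
    Nice E v x y ∨ Tri E v x y := by
  by_cases h : ({v, x, y} : Finset V) ∈ E
  · exact .inr ⟨hx.symm, hy.symm, hxy, h⟩
  · exact .inl ⟨hx, hy, hxy, h⟩

theorem LowDegree.exists_five (hL : LowDegree E v) (h : Nice E v x y) (hz : Tri E x y z) :
    (∃ w q r s t, Five E x y z w {x, y, z} q r s t) ∨
      ∃ w q r s t, Five E y x z w {x, y, z} q r s t := by
  obtain ⟨a, b, h1, h2, h3, h4, h5, h6, p, q, r, s, t, k1, k2, k3, k4, k5, k6, hinc⟩ :=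
    hL.good x y h.1 h.2.1 h.2.2.1 h.2.2.2
  have hf : Five E x y a b p q r s t := ⟨⟨h1, h2, h3, h4, h5, h6⟩, ⟨k1, k2, k3, k4, k5⟩, k6, hinc⟩
  have hz' := hz.ne
  have key : ∀ c, c ∈ ({x, y, z} : Finset V) → c ≠ x → c ≠ y → c = z := by
    intro c hc
    simp only [Finset.mem_insert, Finset.mem_singleton] at hc
    tauto
  rcases hf.mem_four hL.uniform hL.free hz.2.2.2 (by simp) (by simp) with rfl | rfl | rfl | rfl
  · obtain rfl := key a hinc.2.1 h2.symm h4.symm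
    exact .inl ⟨_, _, _, _, _, hf⟩
  · obtain rfl := key b (by tauto) h3.symm h5.symm
    exact .inl ⟨_, _, _, _, _, hf.swap_right⟩
  · obtain rfl := key a (by tauto) h2.symm h4.symm
    exact .inr ⟨_, _, _, _, _, hf.swap_left⟩
  · obtain rfl := key b (by tauto) h3.symm h5.symm
    exact .inr ⟨_, _, _, _, _, hf.swap_left.swap_right⟩

theorem Five.exists_other (hE : Is3Uniform E) (h : Five E x y z w {x, y, z} q r s t) :
    ∃ c, Tri E y z c ∧ c ≠ x := by
  obtain ⟨h1, h2, h3, h4⟩ := h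
  obtain ⟨c, hc, he⟩ := exists_tri hE (by tauto : r ∈ E) (by tauto : y ∈ r) (by tauto : z ∈ r)
    (by tauto)
  refine ⟨c, hc, ?_⟩
  rintro rfl
  have : r = {c, y, z} := by rw [he, Finset.pair_comm, Finset.insert_comm]
  simp only [List.nodup_cons, List.mem_cons, List.not_mem_nil, or_false, not_or] at h3
  tauto

theorem LowDegree.local_structure (hL : LowDegree E v) (h : Nice E v x y) (hz : Tri E x y z) :
    ∃ w, (∀ c, Tri E x y c → c = z ∨ c = w) ∧ (∃ c, Tri E z w c) ∧
      ((∀ c, Tri E x z c → c = y ∨ c = w) ∧ (∃ c, Tri E y z c ∧ c ≠ x) ∨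
        (∀ c, Tri E y z c → c = x ∨ c = w) ∧ ∃ c, Tri E x z c ∧ c ≠ y) := by
  rcases hL.exists_five h hz with ⟨w, q, r, s, t, hf⟩ | ⟨w, q, r, s, t, hf⟩
  · refine ⟨w, fun c hc => hf.eq_of_tri hL.uniform hL.free hc, ?_, .inl ⟨fun c hc => ?_, ?_⟩⟩
    · obtain ⟨h1, h2, h3, h4⟩ := hf
      obtain ⟨c, hc, he⟩ := exists_tri hL.uniform (by tauto : t ∈ E) (by tauto : z ∈ t)
        (by tauto : w ∈ t) (by tauto)
      exact ⟨c, hc⟩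
    · exact (hf.rotate (by simp)).eq_of_tri hL.uniform hL.free hc
    · exact hf.exists_other hL.uniform
  · refine ⟨w, fun c hc => hf.eq_of_tri hL.uniform hL.free hc.swap, ?_, .inr ⟨fun c hc => ?_, ?_⟩⟩
    · obtain ⟨h1, h2, h3, h4⟩ := hf
      obtain ⟨c, hc, he⟩ := exists_tri hL.uniform (by tauto : t ∈ E) (by tauto : z ∈ t)
        (by tauto : w ∈ t) (by tauto)
      exact ⟨c, hc⟩
    · exact (hf.rotate (by simp)).eq_of_tri hL.uniform hL.free hc
    · rw [Finset.insert_comm] at hf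
      exact hf.exists_other hL.uniform

theorem LowDegree.codegree_le (hL : LowDegree E v) (h : Nice E v x y) (ha : Tri E x y a)
    (hb : Tri E x y b) (hab : a ≠ b) (hc : Tri E x y c) : c = a ∨ c = b := by
  obtain ⟨w, hw, -⟩ := hL.local_structure h ha
  grind

theorem LowDegree.covered (hL : LowDegree E v) (h : Nice E v x y) (ha : Tri E x y a)
    (hb : Tri E x y b) (hab : a ≠ b) : ∃ s, Tri E a b s := by
  obtain ⟨w, hw, ⟨s, hs⟩, -⟩ := hL.local_structure h ha
  have : b = w := by grind
  exact ⟨s, this ▸ hs⟩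

theorem LowDegree.exists_other (hL : LowDegree E v) (h : Nice E v x y) (hz : Tri E x y z) :
    (∃ t, Tri E x z t ∧ t ≠ y) ∨ ∃ t, Tri E y z t ∧ t ≠ x := by
  obtain ⟨w, -, -, h | h⟩ := hL.local_structure h hz
  · exact .inr h.2
  · exact .inl h.2

theorem LowDegree.apex_eq (hL : LowDegree E v) (hxy : Nice E v x y) (hxz : Nice E v x z)
    (hyz : Nice E v y z) (ht : Tri E x y z) (ha : Tri E x y a) (haz : a ≠ z) (hb : Tri E x z b)
    (hby : b ≠ y) (hc : Tri E y z c) (hcx : c ≠ x) : a = b ∧ b = c := by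
  obtain ⟨w1, h1, -, h1'⟩ := hL.local_structure hxy ht
  obtain ⟨w2, h2, -, h2'⟩ := hL.local_structure hxz ht.swap'
  obtain ⟨w3, h3, -, h3'⟩ := hL.local_structure hyz ht.swap.swap'
  have e1 := h1 a ha
  have e2 := h2 b hb
  have e3 := h3 c hc
  rcases h1' with ⟨h1', -⟩ | ⟨h1', -⟩ <;> rcases h2' with ⟨h2', -⟩ | ⟨h2', -⟩ <;>
    rcases h3' with ⟨h3', -⟩ | ⟨h3', -⟩ <;>
    grind [Tri.swap]

/-- Structure around a triple whose first two vertices form a hyperedge with the low degree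
vertex. -/
theorem LowDegree.special_structure (hL : LowDegree E v) (hs : Tri E v x y) (ha : Tri E x y a)
    (hav : a ≠ v) : ∃ w f g h, w ≠ x ∧ w ≠ y ∧ w ≠ a ∧ w ≠ v ∧
      (∀ c, Tri E x a c → c = y ∨ c = w) ∧ (∀ c, Tri E y a c → c = x ∨ c = w) ∧
      f ∈ E ∧ g ∈ E ∧ h ∈ E ∧ {x, y, a} ≠ f ∧ {x, y, a} ≠ g ∧ {x, y, a} ≠ h ∧
      f ≠ g ∧ f ≠ h ∧ g ≠ h ∧ a ∈ f ∧ w ∈ f ∧ x ∈ g ∧ w ∈ g ∧ y ∈ h ∧ w ∈ h := by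
  have hsn := hs.ne
  have han := ha.ne
  have hn : Nice E v x a := Tri.nice_of_special hL hs (by tauto) hav (by tauto) (by grind)
  have hwv : ∀ {u w z p q r s t}, ¬ Five E u w z v p q r s t := by
    intro u w z p q r s t hf
    obtain ⟨-, ⟨-, h2, -, h2', -⟩, -, -, -, -, h4, -, -, -, h4', -, -⟩ := id hf
    exact hf.distinct.2.2.2.2.2.1 (hL.low q h2 s h2' h4 h4')
  rcases hL.exists_five hn ha.swap' with ⟨w, q, r, s, t, hf⟩ | ⟨w, q, r, s, t, hf⟩
  · exfalso
    have hwv' : w ≠ v := by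
      rintro rfl
      exact hwv hf
    have h5 := (hf.rotate (by simp)).mem_four hL.uniform hL.free hs.2.2.2 (by simp) (by simp)
    obtain ⟨h1, h2, h3, h4⟩ := hf
    have k1 : w ∉ ({v, x, y} : Finset V) := by
      simp only [Finset.mem_insert, Finset.mem_singleton]
      grind
    have k2 : a ∉ ({v, x, y} : Finset V) := by
      simp only [Finset.mem_insert, Finset.mem_singleton]
      grind
    have k3 : a ∈ ({x, a, y} : Finset V) := by simp
    rcases h5 with h | h | h | h <;> rw [h] at k1 k2 <;> tauto
  · have hwv' : w ≠ v := by
      rintro rfl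
      exact hwv hf
    have c1 := fun c => hf.eq_of_tri hL.uniform hL.free (z := c)
    have c2 := fun c => (hf.rotate (by simp)).eq_of_tri hL.uniform hL.free (z := c)
    have h3 := hf.distinct
    obtain ⟨h1, h2, -, h4⟩ := hf
    rw [Finset.pair_comm y a]
    refine ⟨w, q, s, t, h1.2.2.2.2.1.symm, h1.2.2.2.2.2.symm, h1.2.2.1.symm, hwv',
      fun c hc => c1 c hc.swap, fun c hc => c2 c hc.swap, h2.2.1, h2.2.2.2.1, h2.2.2.2.2, ?_⟩
    tauto

end Local

section Counting

variable {E : Finset (Finset V)} {u v w x y z a b c d : V} {p q r s t f : Finset V}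

theorem LowDegree.edge_eq (hL : LowDegree E v) (h : Nice E v x y) (ha : Tri E x y a)
    (hb : Tri E x y b) (hab : a ≠ b) (hf : f ∈ E) (hx : x ∈ f) (hy : y ∈ f) :
    f = {x, y, a} ∨ f = {x, y, b} := by
  obtain ⟨c, hc, rfl⟩ := exists_tri hL.uniform hf hx hy h.2.2.1
  rcases hL.codegree_le h ha hb hab hc with rfl | rfl <;> simp

theorem LowDegree.not_five_of_complete (hL : LowDegree E v) (hyz : Nice E v y z)
    (hxw : Nice E v x w) (hyw : Nice E v y w) (hzw : Nice E v z w) (h1 : Tri E x y z)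
    (h2 : Tri E x y w) (h3 : Tri E x z w) (h4 : Tri E y z w) :
    ¬ Five E x y z w {x, y, z} q r s t := by
  intro hf
  have hd := hf.distinct
  obtain ⟨-, ⟨-, hq, hr, hs, ht⟩, -, i1, i2, i3, i4, i5, i6, i7, i8, i9, i10⟩ := hf
  have e1 := hL.edge_eq hxw h2.swap' h3.swap' h1.ne.2.2 hq i3 i4
  have e2 := hL.edge_eq hyz h1.swap.swap' h4 h2.ne.2.1 hr i5 i6
  have e3 := hL.edge_eq hyw h2.swap.swap' h4.swap' h1.ne.2.1 hs i7 i8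
  have e4 := hL.edge_eq hzw h3.swap.swap' h4.swap.swap' h1.ne.1 ht i9 i10
  have p1 : ({x, w, y} : Finset V) = {x, y, w} := by rw [Finset.pair_comm]
  have p2 : ({x, w, z} : Finset V) = {x, z, w} := by rw [Finset.pair_comm]
  have p3 : ({y, z, x} : Finset V) = {x, y, z} := by rw [Finset.pair_comm, Finset.insert_comm]
  have p4 : ({y, w, x} : Finset V) = {x, y, w} := by rw [Finset.pair_comm, Finset.insert_comm]
  have p5 : ({y, w, z} : Finset V) = {y, z, w} := by rw [Finset.pair_comm]
  have p6 : ({z, w, x} : Finset V) = {x, z, w} := by rw [Finset.pair_comm, Finset.insert_comm]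
  have p7 : ({z, w, y} : Finset V) = {y, z, w} := by rw [Finset.pair_comm, Finset.insert_comm]
  rw [p1, p2] at e1
  rw [p3] at e2
  rw [p4, p5] at e3
  rw [p6, p7] at e4
  grind

/-- The four triples of a 4-set cannot all be present if all its pairs are nice. -/
theorem LowDegree.not_complete (hL : LowDegree E v) (hxy : Nice E v x y) (hxz : Nice E v x z)
    (hyz : Nice E v y z) (hxw : Nice E v x w) (hyw : Nice E v y w) (hzw : Nice E v z w)
    (h1 : Tri E x y z) (h2 : Tri E x y w) (h3 : Tri E x z w) (h4 : Tri E y z w) : False := by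
  rcases hL.exists_five hxy h1 with ⟨w', q, r, s, t, hf⟩ | ⟨w', q, r, s, t, hf⟩
  · have : w' = w := by
      have := hf.eq_of_tri hL.uniform hL.free h2
      grind [h3.ne]
    subst this
    exact hL.not_five_of_complete hyz hxw hyw hzw h1 h2 h3 h4 hf
  · have : w' = w := by
      have := hf.eq_of_tri hL.uniform hL.free h2.swap
      grind [h3.ne]
    subst this
    rw [Finset.insert_comm] at hf
    exact hL.not_five_of_complete hxz hyw hxw hzw h1.swap h2.swap h4 h3 hf

theorem LowDegree.not_five_of_fan (hL : LowDegree E v) (hxy : Nice E v x y) (hxz : Nice E v x z)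
    (hyz : Nice E v y z) (h1 : Tri E x y z) (h2 : Tri E x z w) (h3 : Tri E y z w)
    (huniq : ∀ c, Tri E x y c → c = z) : ¬ Five E x y z d {x, y, z} q r s t := by
  intro hf
  obtain rfl : d = w := by
    have := (hf.rotate (by simp)).eq_of_tri hL.uniform hL.free h2
    grind [h3.ne]
  have hd := hf.distinct
  have hwv : d ≠ v := h2.ne_of_nice hxz
  obtain ⟨hne, ⟨-, hq, hr, hs, ht⟩, -, i1, i2, i3, i4, i5, i6, i7, i8, i9, i10⟩ := hf
  have e2 : r = {y, z, d} := by
    have := hL.edge_eq hyz h1.swap.swap' h3 h2.ne.2.1 hr i5 i6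
    have p3 : ({y, z, x} : Finset V) = {x, y, z} := by rw [Finset.pair_comm, Finset.insert_comm]
    grind
  obtain ⟨α, hα, rfl⟩ := exists_tri hL.uniform hq i3 i4 h2.ne.2.1
  obtain ⟨α', hα', rfl⟩ := exists_tri hL.uniform hs i7 i8 h3.ne.2.1
  have hαy : α ≠ y := by
    rintro rfl
    exact h3.ne.2.2 (huniq d hα.swap').symm
  have hαx : α' ≠ x := by
    rintro rfl
    exact h3.ne.2.2 (huniq d hα'.swap'.swap).symm
  have hαz' : α' ≠ z := by
    rintro rfl
    apply hd.2.2.2.2.2.2.2.1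
    rw [e2, Finset.pair_comm]
  rcases nice_or_special (E := E) hxz.ne.2.1 hwv h2.ne.2.2 with hzw | hzw
  · have hT : t = {x, z, d} := by
      have := hL.edge_eq hzw h2.swap.swap' h3.swap.swap' h1.ne.1 ht i9 i10
      have p3 : ({z, d, x} : Finset V) = {x, z, d} := by rw [Finset.pair_comm, Finset.insert_comm]
      have p4 : ({z, d, y} : Finset V) = {y, z, d} := by rw [Finset.pair_comm, Finset.insert_comm]
      grind
    have hαz : α ≠ z := by
      rintro rfl
      apply hd.2.2.2.2.2.2.1
      rw [hT, Finset.pair_comm]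
    rcases nice_or_special (E := E) hxz.ne.1 hwv h2.ne.2.1 with hxw | hxw
    · have := hL.apex_eq hxz hxw hzw h2 h1.swap' h3.ne.2.1 hα hαz h3.swap.swap' h1.ne.1.symm
      grind
    · have hyw : Nice E v y d := hxw.nice_of_special hL hxy.ne.2.1 hwv h3.ne.2.1
        (by grind [h1.ne, h2.ne])
      have := hL.apex_eq hyz hyw hzw h3 h1.swap.swap' h2.ne.2.1 hα' hαz' h2.swap.swap' h1.ne.1
      grind
  · obtain ⟨w', f, g, h, k1, k2, k3, k4, k5, k6, -⟩ :=
      hL.special_structure hzw h2.swap.swap' hxy.ne.1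
    obtain ⟨w'', f, g, h, l1, l2, l3, l4, l5, l6, -⟩ :=
      hL.special_structure hzw h3.swap.swap' hxy.ne.2.1
    have m1 := l5 x h1.swap.swap'.swap
    have m2 := l6 α' hα'.swap
    have := h2.ne
    grind

theorem LowDegree.fan_false (hL : LowDegree E v) (hxy : Nice E v x y) (hxz : Nice E v x z)
    (hyz : Nice E v y z) (h1 : Tri E x y z) (h2 : Tri E x z w) (h3 : Tri E y z w)
    (huniq : ∀ c, Tri E x y c → c = z) : False := by
  rcases hL.exists_five hxy h1 with ⟨w', q, r, s, t, hf⟩ | ⟨w', q, r, s, t, hf⟩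
  · exact hL.not_five_of_fan hxy hxz hyz h1 h2 h3 huniq hf
  · rw [Finset.insert_comm] at hf
    exact hL.not_five_of_fan hxy.symm hyz hxz h1.swap h3 h2 (fun c hc => huniq c hc.swap) hf

end Counting

/-- The number of hyperedges that contain `u` but not `v`. -/
def avoidDegree (E : Finset (Finset V)) (v u : V) : ℕ := (E.filter fun e => u ∈ e ∧ v ∉ e).card

section Degree

variable {E : Finset (Finset V)} {u v w x y z a b c d : V} {p q r s t f g h : Finset V}

theorem three_le_avoidDegree (hf : f ∈ E ∧ u ∈ f ∧ v ∉ f) (hg : g ∈ E ∧ u ∈ g ∧ v ∉ g)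
    (hh : h ∈ E ∧ u ∈ h ∧ v ∉ h) (hfg : f ≠ g) (hfh : f ≠ h) (hgh : g ≠ h) :
    3 ≤ avoidDegree E v u := by
  refine Finset.two_lt_card.2 ⟨f, ?_, g, ?_, h, ?_, hfg, hfh, hgh⟩ <;>
    simpa only [Finset.mem_filter]

theorem four_le_avoidDegree (hf : f ∈ E ∧ u ∈ f ∧ v ∉ f) (hg : g ∈ E ∧ u ∈ g ∧ v ∉ g)
    (hh : h ∈ E ∧ u ∈ h ∧ v ∉ h) (hp : p ∈ E ∧ u ∈ p ∧ v ∉ p) (hfg : f ≠ g) (hfh : f ≠ h)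
    (hgh : g ≠ h) (hpf : p ≠ f) (hpg : p ≠ g) (hph : p ≠ h) :
    4 ≤ avoidDegree E v u := by
  have hsub : ({p, f, g, h} : Finset (Finset V)) ⊆ E.filter fun e => u ∈ e ∧ v ∉ e := by
    intro x hx
    simp only [Finset.mem_insert, Finset.mem_singleton] at hx
    simp only [Finset.mem_filter]
    rcases hx with rfl | rfl | rfl | rfl <;> assumption
  refine le_trans (card_four_le (f := {p, f, g, h}) (a := p) (b := f) (c := g) (d := h)
    ?_ ?_ ?_ ?_ hpf hpg hph hfg hfh hgh) (Finset.card_le_card hsub) <;> simp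

theorem not_mem_triple (ha : a ≠ v) (hb : b ≠ v) (hc : c ≠ v) :
    v ∉ ({a, b, c} : Finset V) := by
  simp only [Finset.mem_insert, Finset.mem_singleton]
  grind

theorem Tri.eq_or (h1 : Tri E u a b) (h2 : Tri E u c d)
    (h : ({u, a, b} : Finset V) = {u, c, d}) : a = c ∧ b = d ∨ a = d ∧ b = c := by
  have h3 : a ∈ ({u, c, d} : Finset V) := by rw [← h]; simp
  have h4 : b ∈ ({u, c, d} : Finset V) := by rw [← h]; simp
  simp only [Finset.mem_insert, Finset.mem_singleton] at h3 h4
  grind [h1.ne, h2.ne]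

theorem Tri.eq_or_of_avoidDegree_lt (hlt : ¬ 3 ≤ avoidDegree E v u) (hu : u ≠ v)
    (h1 : Tri E u x y) (hx : x ≠ v) (hy : y ≠ v) (h2 : Tri E u x a) (hay : a ≠ y) (hav : a ≠ v)
    (h3 : Tri E u b c) (hb : b ≠ v) (hc : c ≠ v) :
    b = x ∧ c = y ∨ b = y ∧ c = x ∨ b = x ∧ c = a ∨ b = a ∧ c = x := by
  by_contra hcon
  apply hlt
  refine three_le_avoidDegree ⟨h1.2.2.2, by simp, not_mem_triple hu hx hy⟩
    ⟨h2.2.2.2, by simp, not_mem_triple hu hx hav⟩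
      ⟨h3.2.2.2, by simp, not_mem_triple hu hb hc⟩ ?_ ?_ ?_
  · intro h
    have := h1.eq_or h2 h
    grind
  · intro h
    have := h1.eq_or h3 h
    grind
  · intro h
    have := h2.eq_or h3 h
    grind

theorem Tri.eq_of_special (hL : LowDegree E v) (h1 : Tri E u v a) (h2 : Tri E u v b) : a = b := by
  have h := hL.low _ h1.2.2.2 _ h2.2.2.2 (by simp) (by simp)
  grind [h1.eq_or h2 h]

theorem LowDegree.not_avoidDegree_lt (hL : LowDegree E v) (hux : Nice E v u x)
    (huy : Nice E v u y) (hxy : Nice E v x y) (h1 : Tri E u x y) (h2 : Tri E u x b)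
    (hby : b ≠ y) : 3 ≤ avoidDegree E v u := by
  by_contra hlt
  have hbv : b ≠ v := h2.ne_of_nice hux
  have key : ∀ {c d}, Tri E u c d → c ≠ v → d ≠ v →
      c = x ∧ d = y ∨ c = y ∧ d = x ∨ c = x ∧ d = b ∨ c = b ∧ d = x := fun h hc hd =>
    Tri.eq_or_of_avoidDegree_lt hlt hux.ne.1 h1 hxy.ne.1 hxy.ne.2.1 h2 hby hbv h hc hd
  have n1 := h1.ne
  have n2 := h2.ne
  have nv := hux.ne
  have nvy := huy.ne
  obtain ⟨d, hd, hdu⟩ : ∃ d, Tri E x y d ∧ d ≠ u := by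
    rcases hL.exists_other hux h1 with ⟨t, ht, htx⟩ | h
    · have := key ht huy.ne.2.1 (ht.ne_of_nice huy)
      grind
    · exact h
  have hdn := hd.ne
  have hdv := hd.ne_of_nice hxy
  obtain ⟨s, hs⟩ := hL.covered hxy h1.swap.swap' hd hdu.symm
  have hsn := hs.ne
  by_cases hdb : d = b
  · subst hdb
    refine hL.fan_false huy hux hxy.symm h1.swap' h2 hd.swap fun t ht => ?_
    have := key ht huy.ne.2.1 (ht.ne_of_nice huy)
    grind
  obtain rfl : s = v := by
    by_contra hsv
    have := key hs hdv hsv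
    grind
  have hsp : Tri E s u d := hs.swap'.swap
  have hub : Nice E s u b := hsp.nice_of_special hL hux.ne.1 hbv n2.2.1 (by grind)
  have hxb : Nice E s x b := hsp.nice_of_special hL hxy.ne.1 hbv n2.2.2 (by grind)
  obtain ⟨d', hd', hdu'⟩ : ∃ d, Tri E x b d ∧ d ≠ u := by
    rcases hL.exists_other hux h2 with ⟨t, ht, htx⟩ | h
    · have := key ht hbv (ht.ne_of_nice hub)
      grind
    · exact h
  have hdv' := hd'.ne_of_nice hxb
  have hdn' := hd'.ne
  have hdy' : d' ≠ y := by
    rintro rfl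
    have := hL.codegree_le hxy h1.swap.swap' hd hdu.symm hd'.swap'
    grind
  obtain ⟨s', hs'⟩ := hL.covered hxb h2.swap.swap' hd' hdu'.symm
  obtain rfl : s' = s := by
    by_contra hsv
    have := key hs' hdv' hsv
    grind
  obtain rfl : d = d' := Tri.eq_of_special hL hs.swap' hs'.swap'
  obtain ⟨c, hc⟩ := hL.covered hux h1 h2 hby.symm
  have hcn := hc.ne
  have m1 : s' ∉ ({u, x, y} : Finset V) := not_mem_triple (by tauto) (by tauto) (by tauto)
  have m2 : s' ∉ ({u, x, b} : Finset V) := not_mem_triple (by tauto) (by tauto) (by tauto)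
  have m3 : s' ∉ ({x, y, d} : Finset V) := not_mem_triple (by tauto) (by tauto) (by tauto)
  have m4 : s' ∉ ({x, b, d} : Finset V) := not_mem_triple (by tauto) (by tauto) (by tauto)
  have m5 : y ∉ ({u, d, s'} : Finset V) := by
    simp only [Finset.mem_insert, Finset.mem_singleton]
    grind
  have m6 : y ∉ ({u, x, b} : Finset V) := by
    simp only [Finset.mem_insert, Finset.mem_singleton]
    grind
  have m7 : u ∉ ({x, y, d} : Finset V) := by
    simp only [Finset.mem_insert, Finset.mem_singleton]
    grind
  have m8 : u ∉ ({x, b, d} : Finset V) := by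
    simp only [Finset.mem_insert, Finset.mem_singleton]
    grind
  have m9 : y ∉ ({x, b, d} : Finset V) := by
    simp only [Finset.mem_insert, Finset.mem_singleton]
    grind
  have m10 : b ∉ ({u, x, y} : Finset V) := by
    simp only [Finset.mem_insert, Finset.mem_singleton]
    grind
  have m11 : b ∉ ({x, y, d} : Finset V) := by
    simp only [Finset.mem_insert, Finset.mem_singleton]
    grind
  have i1 : s' ∈ ({u, d, s'} : Finset V) := by simp
  have i2 : u ∈ ({u, x, y} : Finset V) ∧ y ∈ ({u, x, y} : Finset V) := by simp
  have i3 : u ∈ ({u, x, b} : Finset V) ∧ b ∈ ({u, x, b} : Finset V) := by simp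
  have i4 : y ∈ ({x, y, d} : Finset V) ∧ d ∈ ({x, y, d} : Finset V) := by simp
  have i5 : b ∈ ({x, b, d} : Finset V) ∧ d ∈ ({x, b, d} : Finset V) := by simp
  have i6 : y ∈ ({y, b, c} : Finset V) ∧ b ∈ ({y, b, c} : Finset V) := by simp
  have i7 : u ∈ ({u, d, s'} : Finset V) ∧ d ∈ ({u, d, s'} : Finset V) := by simp
  refine hL.free ⟨u, y, d, b, n1.2.1, hs.ne.1, n2.2.1, hd.ne.2.2, hby.symm, hdb,
    {u, x, y}, {u, d, s'}, {u, x, b}, {x, y, d}, {y, b, c}, {x, b, d},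
    h1.2.2.2, hs.2.2.2, h2.2.2.2, hd.2.2.2, hc.2.2.2, hd'.2.2.2, ?_, ?_⟩
  · simp only [List.nodup_cons, List.mem_cons, List.not_mem_nil, or_false, not_or]
    generalize ({u, x, y} : Finset V) = e1, ({u, d, s'} : Finset V) = e2,
      ({u, x, b} : Finset V) = e3, ({x, y, d} : Finset V) = e4, ({y, b, c} : Finset V) = e5,
      ({x, b, d} : Finset V) = e6 at *
    have aux : ∀ {e e' : Finset V} (z : V), z ∈ e → z ∉ e' → e ≠ e' := fun z hz hz' h =>
      hz' (h ▸ hz)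
    exact ⟨⟨(aux s' i1 m1).symm, aux y i2.2 m6, aux u i2.1 m7, (aux b i6.2 m10).symm,
      aux u i2.1 m8⟩, ⟨aux s' i1 m2, aux s' i1 m3, (aux y i6.1 m5).symm, aux s' i1 m4⟩,
      ⟨aux u i3.1 m7, (aux y i6.1 m6).symm, aux u i3.1 m8⟩,
      ⟨(aux b i6.2 m11).symm, aux y i4.1 m9⟩, aux y i6.1 m9, id, List.nodup_nil⟩
  · exact ⟨i2.1, i2.2, i7.1, i7.2, i3.1, i3.2, i4.1, i4.2, i6.1, i6.2, i5.2, i5.1⟩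

/-- A vertex on a triple all of whose pairs are nice lies in at least three hyperedges avoiding
the low degree vertex. -/
theorem LowDegree.three_le_of_clean (hL : LowDegree E v) (hux : Nice E v u x)
    (huy : Nice E v u y) (hxy : Nice E v x y) (h : Tri E u x y) : 3 ≤ avoidDegree E v u := by
  rcases hL.exists_other hxy h.swap.swap' with ⟨t, ht, hty⟩ | ⟨t, ht, htx⟩
  · exact hL.not_avoidDegree_lt hux huy hxy h ht.swap hty
  · exact hL.not_avoidDegree_lt huy hux hxy.symm h.swap' ht.swap htx

end Degree

section LowerBound

variable {E : Finset (Finset V)} {u v w x y z a b c d : V} {p q r s t f g h : Finset V}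

theorem LowDegree.not_mem_of_special (hL : LowDegree E v) (hs : Tri E v x y) (hf : f ∈ E)
    (hw : w ∈ f) (hwv : w ≠ v) (hwx : w ≠ x) (hwy : w ≠ y) : v ∉ f := by
  intro hv
  rw [hL.low f hf _ hs.2.2.2 hv (by simp)] at hw
  simp only [Finset.mem_insert, Finset.mem_singleton] at hw
  grind

theorem ne_of_not_mem_triple (h : v ∉ ({a, b, c} : Finset V)) : a ≠ v ∧ b ≠ v ∧ c ≠ v := by
  simp only [Finset.mem_insert, Finset.mem_singleton] at h
  grind

theorem LowDegree.three_le_of_apex (hL : LowDegree E v) (hs : Tri E v x y) (ha : Tri E x y a)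
    (hav : a ≠ v) : 3 ≤ avoidDegree E v a := by
  obtain ⟨w, f, g, h, k1, k2, k3, k4, -, -, hf, -, -, -, -, -, -, -, -, haf, hwf, -⟩ :=
    hL.special_structure hs ha hav
  obtain ⟨c, hc, rfl⟩ := exists_tri hL.uniform hf haf hwf k3.symm
  have hv := ne_of_not_mem_triple (hL.not_mem_of_special hs hf hwf k4 k1 k2)
  have hn := ha.ne
  have hcn := hc.ne
  exact hL.three_le_of_clean (hs.nice_of_special hL hav k4 hcn.1 (by grind))
    (hs.nice_of_special hL hav hv.2.2 hcn.2.1 (by grind))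
    (hs.nice_of_special hL k4 hv.2.2 hcn.2.2 (by grind)) hc

theorem LowDegree.three_le_of_special (hL : LowDegree E v) (hs : Tri E v x y) (ha : Tri E x y a)
    (hav : a ≠ v) : 3 ≤ avoidDegree E v x := by
  by_contra hlt
  have hsn := hs.ne
  have han := ha.ne
  have key : ∀ {c d}, Tri E x c d → c ≠ v → d ≠ v → c = y ∨ d = y := by
    intro c d ht hc hd
    have hn := ht.ne
    by_contra hcon
    exact hlt (hL.three_le_of_clean (hs.nice_of_special hL hsn.1.symm hc hn.1 (by grind))
      (hs.nice_of_special hL hsn.1.symm hd hn.2.1 (by grind))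
      (hs.nice_of_special hL hc hd hn.2.2 (by grind)) ht)
  obtain ⟨w, f, g, h, k1, k2, k3, k4, -, -, -, hg, hh, -, -, -, -, -, hgh, -, -, hxg, hwg, hyh,
    hwh⟩ := hL.special_structure hs ha hav
  obtain ⟨c, hc, rfl⟩ := exists_tri hL.uniform hg hxg hwg k1.symm
  obtain ⟨s, hs', rfl⟩ := exists_tri hL.uniform hh hyh hwh k2.symm
  have hcv := ne_of_not_mem_triple (hL.not_mem_of_special hs hg hwg k4 k1 k2)
  have hsv := ne_of_not_mem_triple (hL.not_mem_of_special hs hh hwh k4 k1 k2)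
  obtain rfl : c = y := by
    have := key hc k4 hcv.2.2
    grind
  have hsn' := hs'.ne
  have hsx : s ≠ x := by
    rintro rfl
    apply hgh
    rw [Finset.pair_comm, Finset.insert_comm, Finset.pair_comm]
  have nyw : Nice E v c w := hs.nice_of_special hL hsn.2.1.symm k4 k2.symm (by grind)
  have nys : Nice E v c s := hs.nice_of_special hL hsn.2.1.symm hsv.2.2 hsn'.2.1 (by grind)
  have nws : Nice E v w s := hs.nice_of_special hL k4 hsv.2.2 hsn'.2.2 (by grind)
  obtain ⟨t, ht⟩ := hL.covered nyw hc.swap'.swap.swap' hs' hsx.symm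
  have htv : t ≠ v := by
    rintro rfl
    have := Tri.eq_of_special hL ht.swap' hs.swap
    grind
  obtain rfl : t = c := by
    have := key ht hsv.2.2 htv
    grind
  have hone : ∀ d, Tri E w s d → d = t := by
    intro d hd
    by_contra hdt
    obtain ⟨-, rfl⟩ := hL.apex_eq nyw nys nws hs' hc.swap'.swap.swap' hsx.symm ht.swap'.swap.swap'
      k1.symm hd hdt
    have := key hd.swap'.swap k4 hsv.2.2
    grind
  exact hL.fan_false nws nyw.symm nys.symm hs'.swap.swap' hc.swap.swap' ht.swap.swap' hone

theorem LowDegree.exists_tri_avoiding (hL : LowDegree E v) (h : Nice E v u w) :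
    ∃ x y, Tri E u x y ∧ x ≠ v ∧ y ≠ v := by
  obtain ⟨x, y, -, h2, h3, -, -, -, p, q, r, s, t, hp, hq, -, -, -, k6, i1, i2, i3, i4, -⟩ :=
    hL.good u w h.1 h.2.1 h.2.2.1 h.2.2.2
  have hpq : p ≠ q := by
    simp only [List.nodup_cons, List.mem_cons, not_or] at k6
    exact k6.1.1
  by_cases hv : v ∈ p
  · have hvq : v ∉ q := fun hvq => hpq (hL.low p hp q hq hv hvq)
    obtain ⟨c, hc, rfl⟩ := exists_tri hL.uniform hq i3 i4 h3
    exact ⟨_, _, hc, (ne_of_not_mem_triple hvq).2⟩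
  · obtain ⟨c, hc, rfl⟩ := exists_tri hL.uniform hp i1 i2 h2
    exact ⟨_, _, hc, (ne_of_not_mem_triple hv).2⟩

theorem LowDegree.exists_nice [Fintype V] (hL : LowDegree E v) (hV : 4 ≤ Fintype.card V)
    (hu : u ≠ v) : ∃ w, Nice E v u w := by
  obtain ⟨w, hw, z, hz, hwz⟩ : ∃ w ∈ ({u, v} : Finset V)ᶜ, ∃ z ∈ ({u, v} : Finset V)ᶜ, w ≠ z := by
    apply Finset.one_lt_card.1
    rw [Finset.card_compl]
    have := Finset.card_le_two (a := u) (b := v)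
    omega
  simp only [Finset.mem_compl, Finset.mem_insert, Finset.mem_singleton, not_or] at hw hz
  rcases nice_or_special (E := E) hu hw.2 (Ne.symm hw.1) with h | h
  · exact ⟨w, h⟩
  · exact ⟨z, h.nice_of_special hL hu hz.2 (Ne.symm hz.1) (by grind)⟩

theorem LowDegree.three_le [Fintype V] (hL : LowDegree E v) (hV : 4 ≤ Fintype.card V)
    (hu : u ≠ v) : 3 ≤ avoidDegree E v u := by
  obtain ⟨w, hw⟩ := hL.exists_nice hV hu
  obtain ⟨x, y, ht, hx, hy⟩ := hL.exists_tri_avoiding hw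
  have hn := ht.ne
  rcases nice_or_special (E := E) hu hx hn.1 with h1 | h1
  · rcases nice_or_special (E := E) hu hy hn.2.1 with h2 | h2
    · rcases nice_or_special (E := E) hx hy hn.2.2 with h3 | h3
      · exact hL.three_le_of_clean h1 h2 h3 ht
      · exact hL.three_le_of_apex h3 ht.swap.swap' hu
    · exact hL.three_le_of_special h2 ht.swap' hx
  · exact hL.three_le_of_special h1 ht hy

end LowerBound

/-- Five hyperedges `uab, ubc, ucd, abd, dca`, the first three of which are all hyperedges
containing `u`. -/
structure Pentagon (E : Finset (Finset V)) (u a b c d : V) : Prop where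
  ne : a ≠ b ∧ a ≠ c ∧ a ≠ d ∧ b ≠ c ∧ b ≠ d ∧ c ≠ d
  tri₁ : Tri E u a b
  tri₂ : Tri E u b c
  tri₃ : Tri E u c d
  tri₄ : Tri E a b d
  tri₅ : Tri E d c a
  star : ∀ x y, Tri E u x y → x = a ∧ y = b ∨ x = b ∧ y = a ∨ x = b ∧ y = c ∨ x = c ∧ y = b ∨
    x = c ∧ y = d ∨ x = d ∧ y = c

/-- A vertex which spans only nice pairs and whose hyperedges span only nice pairs. -/
structure Clean (E : Finset (Finset V)) (v u : V) : Prop where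
  nice : ∀ a, a ≠ v → a ≠ u → Nice E v u a
  link : ∀ a b, Tri E u a b → Nice E v a b

section PentagonLemmas

variable {E : Finset (Finset V)} {u v w x y z a b c d e : V} {p q r s t f g h : Finset V}

theorem exists_tri_of_mem (hE : Is3Uniform E) (hf : f ∈ E) (hu : u ∈ f) :
    ∃ a b, Tri E u a b ∧ f = {u, a, b} := by
  obtain ⟨a, ha, hau⟩ := Finset.exists_mem_ne (by rw [hE f hf]; norm_num : 1 < f.card) u
  obtain ⟨b, hb⟩ := exists_tri hE hf hu ha hau.symm
  exact ⟨a, b, hb⟩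

theorem LowDegree.exists_third (hL : LowDegree E v) (h3 : 3 ≤ avoidDegree E v u) (p q : Finset V) :
    ∃ a b, Tri E u a b ∧ ({u, a, b} : Finset V) ≠ p ∧ ({u, a, b} : Finset V) ≠ q := by
  obtain ⟨f, hf, hpq⟩ := Finset.exists_mem_notMem_of_card_lt_card
    (lt_of_le_of_lt (Finset.card_le_two (a := p) (b := q)) h3)
  simp only [Finset.mem_filter, Finset.mem_insert, Finset.mem_singleton, not_or] at hf hpq
  obtain ⟨a, b, hab, rfl⟩ := exists_tri_of_mem hL.uniform hf.1 hf.2.1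
  exact ⟨a, b, hab, hpq⟩

theorem Clean.eq_or (hc : Clean E v u) (huv : u ≠ v) (hlt : ¬ 4 ≤ avoidDegree E v u)
    {a₁ b₁ a₂ b₂ a₃ b₃ : V} (h1 : Tri E u a₁ b₁) (h2 : Tri E u a₂ b₂) (h3 : Tri E u a₃ b₃)
    (h12 : ({u, a₁, b₁} : Finset V) ≠ {u, a₂, b₂}) (h13 : ({u, a₁, b₁} : Finset V) ≠ {u, a₃, b₃})
    (h23 : ({u, a₂, b₂} : Finset V) ≠ {u, a₃, b₃}) (h : Tri E u x y) :
    x = a₁ ∧ y = b₁ ∨ x = b₁ ∧ y = a₁ ∨ x = a₂ ∧ y = b₂ ∨ x = b₂ ∧ y = a₂ ∨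
      x = a₃ ∧ y = b₃ ∨ x = b₃ ∧ y = a₃ := by
  have hv : ∀ {c d}, Tri E u c d → v ∉ ({u, c, d} : Finset V) := fun ht =>
    not_mem_triple huv (hc.link _ _ ht).1 (hc.link _ _ ht).2.1
  by_contra hcon
  refine hlt (four_le_avoidDegree ⟨h1.2.2.2, by simp, hv h1⟩ ⟨h2.2.2.2, by simp, hv h2⟩
    ⟨h3.2.2.2, by simp, hv h3⟩ ⟨h.2.2.2, by simp, hv h⟩ h12 h13 h23 ?_ ?_ ?_)
  · intro he
    have := h.eq_or h1 he
    tauto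
  · intro he
    have := h.eq_or h2 he
    tauto
  · intro he
    have := h.eq_or h3 he
    tauto

theorem LowDegree.exists_path (hL : LowDegree E v) (hc : Clean E v u) (huv : u ≠ v)
    (h3 : 3 ≤ avoidDegree E v u) (h4 : ¬ 4 ≤ avoidDegree E v u) :
    ∃ a b c d, (a ≠ b ∧ a ≠ c ∧ a ≠ d ∧ b ≠ c ∧ b ≠ d ∧ c ≠ d) ∧
      Tri E u a b ∧ Tri E u b c ∧ Tri E u c d := by
  obtain ⟨x, y, b, hxy, hxb, hby⟩ : ∃ x y b, Tri E u x y ∧ Tri E u x b ∧ b ≠ y := by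
    obtain ⟨x, y, hxy, -⟩ := hL.exists_third h3 ∅ ∅
    rcases hL.exists_other (hc.link _ _ hxy) hxy.swap.swap' with ⟨t, ht, hty⟩ | ⟨t, ht, htx⟩
    · exact ⟨x, y, t, hxy, ht.swap, hty⟩
    · exact ⟨y, x, t, hxy.swap', ht.swap, htx⟩
  obtain ⟨g, h, hgh, hg1, hg2⟩ := hL.exists_third h3 {u, x, y} {u, x, b}
  have hne : ({u, x, y} : Finset V) ≠ {u, x, b} := by
    intro he
    have := hxy.eq_or hxb he
    grind
  have key : ∀ {s t}, Tri E u s t → _ := fun {s t} ht =>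
    hc.eq_or huv h4 hxy hxb hgh hne hg1.symm hg2.symm ht
  have n1 := hxy.ne
  have n2 := hxb.ne
  have n3 := hgh.ne
  have l1 := hc.link _ _ hxy
  have l2 := hc.link _ _ hxb
  have l3 := hc.link _ _ hgh
  have ux := hc.nice x l1.1 n1.1.symm
  have uy := hc.nice y l1.2.1 n1.2.1.symm
  have ub := hc.nice b l2.2.1 n2.2.1.symm
  have hgx : g ≠ x := by
    rintro rfl
    rcases hL.codegree_le ux hxy hxb hby.symm hgh with rfl | rfl
    · exact hg1 rfl
    · exact hg2 rfl
  have hhx : h ≠ x := by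
    rintro rfl
    rcases hL.codegree_le ux hxy hxb hby.symm hgh.swap' with rfl | rfl
    · exact hg1 (by rw [Finset.pair_comm])
    · exact hg2 (by rw [Finset.pair_comm])
  have hnby : ¬ Tri E u b y := by
    intro hb
    by_cases hone : ∀ c, Tri E x b c → c = u
    · exact hL.fan_false l2 ux.symm ub.symm hxb.swap.swap' hxy.swap hb.swap hone
    · push Not at hone
      obtain ⟨c, hc1, hcu⟩ := hone
      obtain ⟨-, rfl⟩ := hL.apex_eq ux ub l2 hxb hxy hby.symm hb n1.2.2.symm hc1 hcu
      exact hL.not_complete ux ub l2 uy l1 (hc.link _ _ hb) hxb hxy hb hc1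
  have hmeet : g = y ∨ g = b ∨ h = y ∨ h = b := by
    by_contra! hcon
    rcases hL.exists_other l3 hgh.swap.swap' with ⟨t, ht, hty⟩ | ⟨t, ht, htx⟩
    · have := key ht.swap
      grind
    · have := key ht.swap
      grind
  rcases hmeet with rfl | rfl | rfl | rfl
  · exact ⟨b, x, g, h, by grind [Tri.swap'], hxb.swap', hxy, hgh⟩
  · exact ⟨y, x, g, h, by grind [Tri.swap'], hxy.swap', hxb, hgh⟩
  · exact ⟨b, x, h, g, by grind [Tri.swap'], hxb.swap', hxy, hgh.swap'⟩
  · exact ⟨y, x, h, g, by grind [Tri.swap'], hxy.swap', hxb, hgh.swap'⟩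

theorem LowDegree.tri_of_path (hL : LowDegree E v) (hc : Clean E v u)
    (hne : a ≠ b ∧ a ≠ c ∧ a ≠ d ∧ b ≠ c ∧ b ≠ d ∧ c ≠ d)
    (h1 : Tri E u a b) (h2 : Tri E u b c) (h3 : Tri E u c d)
    (star : ∀ x y, Tri E u x y → x = a ∧ y = b ∨ x = b ∧ y = a ∨ x = b ∧ y = c ∨ x = c ∧ y = b ∨
      x = c ∧ y = d ∨ x = d ∧ y = c) : Tri E a b d := by
  have l1 := hc.link _ _ h1
  have l2 := hc.link _ _ h2
  have ub := hc.nice b l1.2.1 h1.ne.2.1.symm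
  have uc := hc.nice c l2.2.1 h2.ne.2.1.symm
  have hone : ∀ e, Tri E b c e → e = u := by
    intro e he
    by_contra heu
    obtain ⟨rfl, -⟩ := hL.apex_eq ub uc l2 h2 h1.swap' hne.2.1 h3 hne.2.2.2.2.1.symm he heu
    exact hne.2.2.1 rfl
  rcases hL.exists_other ub h1.swap' with ⟨t, ht, htb⟩ | ⟨t, ht, htu⟩
  · have := star _ _ ht
    grind
  · obtain ⟨s, hs⟩ := hL.covered l1 h1.swap.swap' ht.swap htu.symm
    have hts := star _ _ hs
    have htn := ht.ne
    have hac : t ≠ c := by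
      rintro rfl
      exact h1.ne.1 (hone _ ht.swap').symm
    obtain rfl : t = d := by grind
    exact ht.swap

theorem LowDegree.exists_pentagon (hL : LowDegree E v) (hc : Clean E v u) (huv : u ≠ v)
    (h3 : 3 ≤ avoidDegree E v u) (h4 : ¬ 4 ≤ avoidDegree E v u) :
    ∃ a b c d, Pentagon E u a b c d := by
  obtain ⟨a, b, c, d, hne, t1, t2, t3⟩ := hL.exists_path hc huv h3 h4
  have star : ∀ x y, Tri E u x y → x = a ∧ y = b ∨ x = b ∧ y = a ∨ x = b ∧ y = c ∨
      x = c ∧ y = b ∨ x = c ∧ y = d ∨ x = d ∧ y = c := by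
    intro x y h
    refine hc.eq_or huv h4 t1 t2 t3 ?_ ?_ ?_ h
    · intro he
      have := t1.eq_or t2 he
      grind
    · intro he
      have := t1.eq_or t3 he
      grind
    · intro he
      have := t2.eq_or t3 he
      grind
  refine ⟨a, b, c, d, hne, t1, t2, t3, hL.tri_of_path hc hne t1 t2 t3 star, ?_, star⟩
  refine hL.tri_of_path hc (by tauto) t3.swap' t2.swap' t1.swap' fun x y h => ?_
  have := star x y h
  tauto

end PentagonLemmas

section UpperDegree

variable {E : Finset (Finset V)} {u v w x y z a b c d : V} {p q r s t f g h : Finset V}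

theorem ne_of_mem_of_not_mem_right (hx : x ∈ f) (hx' : x ∉ g) : f ≠ g := fun h => hx' (h ▸ hx)

theorem Pentagon.four_le (hP : Pentagon E u a b c d) (hu : u ≠ v)
    (hv : a ≠ v ∧ b ≠ v ∧ c ≠ v ∧ d ≠ v) (hw : w ∉ ({u, a, b, c, d} : Finset V))
    (hx : x = a ∨ x = b ∨ x = c ∨ x = d) (hf : f ∈ E) (hwf : w ∈ f) (hxf : x ∈ f) (hvf : v ∉ f) :
    4 ≤ avoidDegree E v x := by
  obtain ⟨hne, h1, h2, h3, h4, h5, -⟩ := hP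
  have n1 := h1.ne
  have n3 := h3.ne
  simp only [Finset.mem_insert, Finset.mem_singleton, not_or] at hw
  have key : ∀ {a b c : V}, w ≠ a → w ≠ b → w ≠ c → f ≠ {a, b, c} := fun ha hb hc =>
    ne_of_mem_of_not_mem_right hwf (not_mem_triple ha.symm hb.symm hc.symm)
  have k1 := key hw.1 hw.2.1 hw.2.2.1
  have k2 := key hw.1 hw.2.2.1 hw.2.2.2.1
  have k3 := key hw.1 hw.2.2.2.1 hw.2.2.2.2
  have k4 := key hw.2.1 hw.2.2.1 hw.2.2.2.2
  have k5 := key hw.2.2.2.2 hw.2.2.2.1 hw.2.1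
  have m1 := not_mem_triple hu hv.1 hv.2.1
  have m2 := not_mem_triple hu hv.2.1 hv.2.2.1
  have m3 := not_mem_triple hu hv.2.2.1 hv.2.2.2
  have m4 := not_mem_triple hv.1 hv.2.1 hv.2.2.2
  have m5 := not_mem_triple hv.2.2.2 hv.2.2.1 hv.1
  obtain ⟨-, hac, had, hbc, hbd, hcd⟩ := hne
  obtain ⟨hua, hub, hab⟩ := n1
  obtain ⟨huc, hud, -⟩ := n3
  have l1 : c ∉ ({u, a, b} : Finset V) ∧ d ∉ ({u, a, b} : Finset V) :=
    ⟨not_mem_triple huc hac hbc, not_mem_triple hud had hbd⟩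
  have l2 : a ∉ ({u, b, c} : Finset V) ∧ d ∉ ({u, b, c} : Finset V) :=
    ⟨not_mem_triple hua hab.symm hac.symm, not_mem_triple hud hbd hcd⟩
  have l3 : a ∉ ({u, c, d} : Finset V) ∧ b ∉ ({u, c, d} : Finset V) :=
    ⟨not_mem_triple hua hac.symm had.symm, not_mem_triple hub hbc.symm hbd.symm⟩
  have l4 : c ∉ ({a, b, d} : Finset V) := not_mem_triple hac hbc hcd.symm
  have i : b ∈ ({a, b, d} : Finset V) ∧ d ∈ ({a, b, d} : Finset V) ∧ a ∈ ({a, b, d} : Finset V) ∧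
    c ∈ ({u, b, c} : Finset V) ∧ c ∈ ({d, c, a} : Finset V) ∧ d ∈ ({d, c, a} : Finset V) ∧
    a ∈ ({d, c, a} : Finset V) ∧ d ∈ ({u, c, d} : Finset V) ∧ c ∈ ({u, c, d} : Finset V) ∧
    a ∈ ({u, a, b} : Finset V) ∧ b ∈ ({u, a, b} : Finset V) ∧ b ∈ ({u, b, c} : Finset V) := by
    simp
  have aux := fun {x : V} {f g : Finset V} => ne_of_mem_of_not_mem_right (x := x) (f := f) (g := g)
  rcases hx with rfl | rfl | rfl | rfl
  · exact four_le_avoidDegree ⟨h1.2.2.2, by simp, m1⟩ ⟨h4.2.2.2, by simp, m4⟩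
      ⟨h5.2.2.2, by simp, m5⟩ ⟨hf, hxf, hvf⟩ (aux i.2.1 l1.2).symm
      (aux i.2.2.2.2.1 l1.1).symm (aux i.2.2.2.2.1 l4).symm k1 k4 k5
  · exact four_le_avoidDegree ⟨h1.2.2.2, by simp, m1⟩ ⟨h2.2.2.2, by simp, m2⟩
      ⟨h4.2.2.2, by simp, m4⟩ ⟨hf, hxf, hvf⟩ (aux i.2.2.2.1 l1.1).symm
      (aux i.2.1 l1.2).symm (aux i.2.1 l2.2).symm k1 k2 k4
  · exact four_le_avoidDegree ⟨h2.2.2.2, by simp, m2⟩ ⟨h3.2.2.2, by simp, m3⟩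
      ⟨h5.2.2.2, by simp, m5⟩ ⟨hf, hxf, hvf⟩ (aux i.2.2.2.2.2.2.2.1 l2.2).symm
      (aux i.2.2.2.2.2.1 l2.2).symm (aux i.2.2.2.2.2.2.1 l3.1).symm k2 k3 k5
  · exact four_le_avoidDegree ⟨h3.2.2.2, by simp, m3⟩ ⟨h4.2.2.2, by simp, m4⟩
      ⟨h5.2.2.2, by simp, m5⟩ ⟨hf, hxf, hvf⟩ (aux i.1 l3.2).symm
      (aux i.2.2.2.2.2.2.1 l3.1).symm (aux i.2.2.2.2.1 l4).symm k3 k4 k5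

theorem Pentagon.mem_of_good (hE : Is3Uniform E) (hP : Pentagon E u a b c d) (hp : p ∈ E)
    (hu : u ∈ p) (hx : x ∈ p) (hux : u ≠ x) : x = a ∨ x = b ∨ x = c ∨ x = d := by
  obtain ⟨c, hc, -⟩ := exists_tri hE hp hu hx hux
  have := hP.star _ _ hc
  tauto

theorem LowDegree.exists_nodup_good (hL : LowDegree E v) (h : Nice E v u w) :
    ∃ x y p q r s, (u ≠ x ∧ u ≠ y ∧ w ≠ x ∧ w ≠ y ∧ x ≠ y) ∧ (p ∈ E ∧ q ∈ E ∧ r ∈ E ∧ s ∈ E) ∧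
      r ≠ s ∧ u ∈ p ∧ x ∈ p ∧ u ∈ q ∧ y ∈ q ∧ w ∈ r ∧ x ∈ r ∧ w ∈ s ∧ y ∈ s := by
  obtain ⟨x, y, h1, h2, h3, h4, h5, h6, p, q, r, s, t, k1, k2, k3, k4, k5, k6, hinc⟩ :=
    hL.good u w h.1 h.2.1 h.2.2.1 h.2.2.2
  have hf : Five E u w x y p q r s t := ⟨⟨h1, h2, h3, h4, h5, h6⟩, ⟨k1, k2, k3, k4, k5⟩, k6, hinc⟩
  exact ⟨x, y, p, q, r, s, ⟨h2, h3, h4, h5, h6⟩, ⟨k1, k2, k3, k4⟩, hf.distinct.2.2.2.2.2.2.2.1,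
    by tauto⟩

theorem exists_not_mem_six [Fintype V] (hV : 7 ≤ Fintype.card V) (u v a b c d : V) :
    ∃ w, w ≠ v ∧ w ∉ ({u, a, b, c, d} : Finset V) := by
  have h6 : ({v, u, a, b, c, d} : Finset V).card < (Finset.univ : Finset V).card :=
    lt_of_le_of_lt Finset.card_le_six hV
  obtain ⟨w, -, hw⟩ := Finset.exists_mem_notMem_of_card_lt_card h6
  rw [Finset.mem_insert, not_or] at hw
  exact ⟨w, hw⟩

theorem LowDegree.exists_four_le_of_special [Fintype V] (hL : LowDegree E v)
    (hV : 7 ≤ Fintype.card V) (hs : Tri E v x y) : ∃ z, z ≠ v ∧ 4 ≤ avoidDegree E v z := by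
  by_contra! hcon
  have hsn := hs.ne
  by_cases hall : ∀ u ∈ ({v, x, y} : Finset V)ᶜ, Tri E u x y
  · have hle : ({v, x, y} : Finset V)ᶜ.card ≤ avoidDegree E v x := by
      refine Finset.card_le_card_of_injOn (fun u => {u, x, y}) ?_ ?_
      · intro u hu
        have hu' := hu
        simp only [Finset.coe_compl, Set.mem_compl_iff, Finset.mem_coe, Finset.mem_insert,
          Finset.mem_singleton, not_or] at hu'
        refine Finset.mem_coe.2 (Finset.mem_filter.2 ⟨(hall u (Finset.mem_coe.1 hu)).2.2.2,
          by simp, not_mem_triple hu'.1 hsn.1.symm hsn.2.1.symm⟩)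
      · intro u hu w hw he
        have hu' := hu
        simp only [Finset.coe_compl, Set.mem_compl_iff, Finset.mem_coe, Finset.mem_insert,
          Finset.mem_singleton, not_or] at hu'
        have : u ∈ ({w, x, y} : Finset V) := by
          have he' : ({u, x, y} : Finset V) = {w, x, y} := he
          rw [← he']
          simp
        simp only [Finset.mem_insert, Finset.mem_singleton] at this
        tauto
    rw [Finset.card_compl] at hle
    have h3 := Finset.card_le_three (a := v) (b := x) (c := y)
    have := hcon x hsn.1.symm
    omega
  · push Not at hall
    obtain ⟨u, hu, hut⟩ := hall
    simp only [Finset.mem_compl, Finset.mem_insert, Finset.mem_singleton, not_or] at hu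
    have hvu : ∀ {f}, f ∈ E → u ∈ f → v ∉ f := fun hf huf =>
      hL.not_mem_of_special hs hf huf hu.1 hu.2.1 hu.2.2
    have hc : Clean E v u := by
      refine ⟨fun a ha hau => hs.nice_of_special hL hu.1 ha hau.symm (by grind), fun a b hab => ?_⟩
      have hn := ne_of_not_mem_triple (hvu hab.2.2.2 (by simp))
      refine hs.nice_of_special hL hn.2.1 hn.2.2 hab.ne.2.2 ?_
      rintro (⟨rfl, rfl⟩ | ⟨rfl, rfl⟩)
      · exact hut hab
      · exact hut hab.swap'
    obtain ⟨a, b, c, d, hP⟩ := hL.exists_pentagon hc hu.1 (hL.three_le (by omega) hu.1)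
      (not_le.2 (hcon u hu.1))
    obtain ⟨w, hwv, hw⟩ := exists_not_mem_six hV u v a b c d
    have hwu : w ≠ u := fun h => hw (by simp [h])
    have hv : a ≠ v ∧ b ≠ v ∧ c ≠ v ∧ d ≠ v :=
      ⟨(hc.link _ _ hP.tri₁).1, (hc.link _ _ hP.tri₁).2.1, (hc.link _ _ hP.tri₃).1,
        (hc.link _ _ hP.tri₃).2.1⟩
    obtain ⟨x', y', p, q, r, s, hne, ⟨hp, hq, hr, hs'⟩, hrs, i1, i2, i3, i4, i5, i6, i7, i8⟩ :=
      hL.exists_nodup_good (hc.nice w hwv hwu)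
    have hx' := hP.mem_of_good hL.uniform hp i1 i2 hne.1
    have hy' := hP.mem_of_good hL.uniform hq i3 i4 hne.2.1
    by_cases hvr : v ∈ r
    · have hvs : v ∉ s := fun hvs => hrs (hL.low r hr s hs' hvr hvs)
      exact absurd (hP.four_le hu.1 hv hw hy' hs' i7 i8 hvs)
        (not_le.2 (hcon y' (by grind)))
    · exact absurd (hP.four_le hu.1 hv hw hx' hr i5 i6 hvr)
        (not_le.2 (hcon x' (by grind)))

theorem Pentagon.closed (hL : LowDegree E v) (hP : Pentagon E u a b c d)
    (hnice : ∀ x y, x ≠ v → y ≠ v → x ≠ y → Nice E v x y)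
    (huv : u ≠ v) (hv : a ≠ v ∧ b ≠ v ∧ c ≠ v ∧ d ≠ v)
    (hx : x ∈ ({u, a, b, c, d} : Finset V)) (hy : y ∈ ({u, a, b, c, d} : Finset V))
    (hz : Tri E x y z) : z ∈ ({u, a, b, c, d} : Finset V) := by
  obtain ⟨hne, h1, h2, h3, h4, h5, star⟩ := hP
  have n1 := h1.ne
  have n3 := h3.ne
  have ab := hnice a b (by tauto) (by tauto) (by tauto)
  have ac := hnice a c (by tauto) (by tauto) (by tauto)
  have ad := hnice a d (by tauto) (by tauto) (by tauto)
  have bc := hnice b c (by tauto) (by tauto) (by tauto)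
  have bd := hnice b d (by tauto) (by tauto) (by tauto)
  have cd := hnice c d (by tauto) (by tauto) (by tauto)
  have ub := hnice u b huv (by tauto) (by tauto)
  have uc := hnice u c huv (by tauto) (by tauto)
  have cab : ∀ e, Tri E a b e → e = u ∨ e = d := fun e he =>
    hL.codegree_le ab h1.swap.swap' h4 n3.2.1 he
  have cad : ∀ e, Tri E a d e → e = b ∨ e = c := fun e he =>
    hL.codegree_le ad h4.swap' h5.swap'.swap hne.2.2.2.1 he
  have ccd : ∀ e, Tri E c d e → e = u ∨ e = a := fun e he =>
    hL.codegree_le cd h3.swap.swap' h5.swap n1.1 he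
  have cac : ∀ e, Tri E a c e → e = d := by
    intro e he
    by_contra hed
    obtain ⟨-, rfl⟩ := hL.apex_eq ac ad cd h5.swap'.swap.swap' he hed h4.swap' hne.2.2.2.1
      h3.swap.swap' n1.1
    exact n1.2.1 rfl
  have cbd : ∀ e, Tri E b d e → e = a := by
    intro e he
    by_contra hed
    obtain ⟨-, rfl⟩ := hL.apex_eq bd ab.symm ad.symm h4.swap.swap' he hed h1.swap.swap'.swap
      n3.2.1 h5.swap' hne.2.2.2.1.symm
    exact n3.1 rfl
  have cbc : ∀ e, Tri E b c e → e = u := by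
    intro e he
    by_contra heu
    obtain ⟨rfl, -⟩ := hL.apex_eq ub uc bc h2 h1.swap' hne.2.1 h3 hne.2.2.2.2.1.symm he heu
    exact hne.2.2.1 rfl
  have hz' := hz.swap
  have hn := hz.ne.1
  simp only [Finset.mem_insert, Finset.mem_singleton] at hx hy ⊢
  clear h1 h2 h3 h4 h5 ab ac ad bc bd cd ub uc hnice hv
  rcases hx with rfl | rfl | rfl | rfl | rfl
  · have := star _ _ hz
    tauto
  all_goals
    rcases hy with rfl | rfl | rfl | rfl | rfl
    · have := star _ _ hz'
      tauto
    all_goals grind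

theorem Pentagon.center_mem (hP : Pentagon E u a b c d) {S : Finset V}
    (hS : ∀ x y z, x ∈ S → y ∈ S → Tri E x y z → z ∈ S) (hx : x ∈ S) (hy : y ∈ S) (hxy : x ≠ y)
    (hx' : x = a ∨ x = b ∨ x = c ∨ x = d) (hy' : y = a ∨ y = b ∨ y = c ∨ y = d) : u ∈ S := by
  obtain ⟨hne, h1, h2, h3, h4, h5, star⟩ := hP
  have hab : a ∈ S → b ∈ S → u ∈ S := fun h h' => hS a b u h h' h1.swap.swap'
  have hbc : b ∈ S → c ∈ S → u ∈ S := fun h h' => hS b c u h h' h2.swap.swap'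
  have hcd : c ∈ S → d ∈ S → u ∈ S := fun h h' => hS c d u h h' h3.swap.swap'
  have had : a ∈ S → d ∈ S → b ∈ S := fun h h' => hS a d b h h' h4.swap'
  have hac : a ∈ S → c ∈ S → d ∈ S := fun h h' => hS a c d h h' h5.swap'.swap.swap'
  have hbd : b ∈ S → d ∈ S → a ∈ S := fun h h' => hS b d a h h' h4.swap.swap'
  grind

theorem LowDegree.exists_four_le_of_isolated [Fintype V] (hL : LowDegree E v)
    (hV : 7 ≤ Fintype.card V) (hv : ∀ e ∈ E, v ∉ e) :
    ∃ S : Finset V, 4 ≤ S.card ∧ ∀ z ∈ S, z ≠ v ∧ 4 ≤ avoidDegree E v z := by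
  have hnice : ∀ x y, x ≠ v → y ≠ v → x ≠ y → Nice E v x y := fun x y hx hy hxy =>
    ⟨hx, hy, hxy, fun h => hv _ h (by simp)⟩
  have hclean : ∀ u, u ≠ v → Clean E v u := by
    refine fun u hu => ⟨fun a ha hau => hnice _ _ hu ha hau.symm, fun a b hab => ?_⟩
    have := ne_of_not_mem_triple (hv _ hab.2.2.2)
    exact hnice _ _ this.2.1 this.2.2 hab.ne.2.2
  by_cases hall : ∀ u, u ≠ v → 4 ≤ avoidDegree E v u
  · refine ⟨{v}ᶜ, ?_, fun z hz => ?_⟩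
    · rw [Finset.card_compl, Finset.card_singleton]
      omega
    · have hzv : z ≠ v := by simpa using hz
      exact ⟨hzv, hall z hzv⟩
  push Not at hall
  obtain ⟨u, huv, hlt⟩ := hall
  have pent : ∀ u, u ≠ v → avoidDegree E v u < 4 → ∃ a b c d, Pentagon E u a b c d ∧
      a ≠ v ∧ b ≠ v ∧ c ≠ v ∧ d ≠ v := by
    intro u hu hlt
    obtain ⟨a, b, c, d, hP⟩ := hL.exists_pentagon (hclean u hu) hu (hL.three_le (by omega) hu)
      (not_le.2 hlt)
    exact ⟨a, b, c, d, hP, ((hclean u hu).link _ _ hP.tri₁).1,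
      ((hclean u hu).link _ _ hP.tri₁).2.1, ((hclean u hu).link _ _ hP.tri₃).1,
      ((hclean u hu).link _ _ hP.tri₃).2.1⟩
  obtain ⟨a, b, c, d, hP, hPv⟩ := pent u huv hlt
  have closed : ∀ x y z, x ∈ ({u, a, b, c, d} : Finset V) → y ∈ ({u, a, b, c, d} : Finset V) →
      Tri E x y z → z ∈ ({u, a, b, c, d} : Finset V) := fun x y z hx hy hz =>
    hP.closed hL hnice huv hPv hx hy hz
  have hmem : ∀ {x}, x = a ∨ x = b ∨ x = c ∨ x = d → x ∈ ({u, a, b, c, d} : Finset V) := by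
    intro x hx
    simp only [Finset.mem_insert, Finset.mem_singleton]
    exact .inr hx
  have houter : ∀ w, w ≠ v → w ∉ ({u, a, b, c, d} : Finset V) → 4 ≤ avoidDegree E v w := by
    intro w hwv hw
    by_contra hlt'
    obtain ⟨a', b', c', d', hP', -⟩ := pent w hwv (not_le.1 hlt')
    have hwu : u ≠ w := fun h => hw (by simp [h])
    obtain ⟨x, y, p, q, r, s, hne, ⟨hp, hq, hr, hs⟩, -, i1, i2, i3, i4, i5, i6, i7, i8⟩ :=
      hL.exists_nodup_good (hnice u w huv hwv hwu)
    exact hw (hP'.center_mem closed (hmem (hP.mem_of_good hL.uniform hp i1 i2 hne.1))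
      (hmem (hP.mem_of_good hL.uniform hq i3 i4 hne.2.1)) hne.2.2.2.2
      (hP'.mem_of_good hL.uniform hr i5 i6 hne.2.2.1)
      (hP'.mem_of_good hL.uniform hs i7 i8 hne.2.2.2.1))
  obtain ⟨w, hwv, hw⟩ := exists_not_mem_six hV u v a b c d
  have hwu : u ≠ w := fun h => hw (by simp [h])
  obtain ⟨x, y, p, q, r, s, hne, ⟨hp, hq, hr, hs⟩, -, i1, i2, i3, i4, i5, i6, i7, i8⟩ :=
    hL.exists_nodup_good (hnice u w huv hwv hwu)
  have hx := hP.mem_of_good hL.uniform hp i1 i2 hne.1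
  have hy := hP.mem_of_good hL.uniform hq i3 i4 hne.2.1
  obtain ⟨w', hw', -⟩ := exists_tri hL.uniform hr i5 i6 hne.2.2.1
  have hwc : w' ∉ ({u, a, b, c, d} : Finset V) := fun h =>
    hw (closed x w' w (hmem hx) h hw'.swap.swap')
  have hwv' : w' ≠ v := (ne_of_not_mem_triple (hv _ hw'.2.2.2)).2.2
  refine ⟨{x, y, w, w'}, card_four_le (a := x) (b := y) (c := w) (d := w') (by simp) (by simp)
    (by simp) (by simp) hne.2.2.2.2 hne.2.2.1.symm hw'.ne.2.2 hne.2.2.2.1.symm ?_ hw'.ne.2.1,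
    fun z hz => ?_⟩
  · rintro rfl
    exact hwc (hmem hy)
  · simp only [Finset.mem_insert, Finset.mem_singleton] at hz
    rcases hz with rfl | rfl | rfl | rfl
    · exact ⟨by grind, hP.four_le huv hPv hw hx hr i5 i6 (hv _ hr)⟩
    · exact ⟨by grind, hP.four_le huv hPv hw hy hs i7 i8 (hv _ hs)⟩
    · exact ⟨hwv, houter _ hwv hw⟩
    · exact ⟨hwv', houter _ hwv' hwc⟩

theorem sum_avoidDegree [Fintype V] (hE : Is3Uniform E) (v : V) :
    ∑ u, avoidDegree E v u = 3 * (E.filter fun e => v ∉ e).card := by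
  have h := Finset.sum_card_bipartiteAbove_eq_sum_card_bipartiteBelow
    (s := (Finset.univ : Finset V)) (t := E.filter fun e => v ∉ e) (fun u e => u ∈ e)
  have h1 : ∀ u, (Finset.bipartiteAbove (fun (u : V) (e : Finset V) => u ∈ e)
      (E.filter fun e => v ∉ e) u).card = avoidDegree E v u := by
    intro u
    rw [Finset.bipartiteAbove, Finset.filter_filter, avoidDegree]
    simp only [and_comm]
  have h2 : ∀ e ∈ E.filter fun e => v ∉ e,
      (Finset.bipartiteBelow (fun (u : V) (e : Finset V) => u ∈ e) Finset.univ e).card = 3 := by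
    intro e he
    rw [Finset.bipartiteBelow, Finset.filter_univ_mem]
    exact hE e (Finset.mem_filter.1 he).1
  simp only [h1] at h
  rw [h, Finset.sum_congr rfl h2, Finset.sum_const, smul_eq_mul, mul_comm]

theorem LowDegree.card_lt [Fintype V] (hL : LowDegree E v) (hV : 7 ≤ Fintype.card V) :
    Fintype.card V < E.card := by
  have hsum := sum_avoidDegree hL.uniform v
  have hsplit := Finset.card_filter_add_card_filter_not (s := E) (fun e => v ∈ e)
  have hlow : ∀ S : Finset V, (∀ z ∈ S, z ≠ v ∧ 4 ≤ avoidDegree E v z) →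
      3 * (Fintype.card V - 1) + S.card ≤ ∑ u, avoidDegree E v u := by
    intro S hS
    have hle : ∑ u ∈ ({v} : Finset V)ᶜ, (3 + if u ∈ S then 1 else 0) ≤
        ∑ u ∈ ({v} : Finset V)ᶜ, avoidDegree E v u := by
      refine Finset.sum_le_sum fun u hu => ?_
      split_ifs with h
      · exact (hS u h).2
      · exact hL.three_le (by omega) (by simpa using hu)
    rw [Finset.sum_add_distrib, Finset.sum_const, Finset.card_compl, Finset.card_singleton,
      Finset.sum_boole] at hle
    have hSe : ({v} : Finset V)ᶜ.filter (· ∈ S) = S := by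
      ext z
      simp only [Finset.mem_filter, Finset.mem_compl, Finset.mem_singleton]
      exact ⟨fun h => h.2, fun h => ⟨(hS z h).1, h⟩⟩
    rw [hSe] at hle
    have := Finset.sum_le_sum_of_subset (f := avoidDegree E v)
        (Finset.subset_univ ({v}ᶜ : Finset V))
    simp only [smul_eq_mul, Nat.cast_id] at hle
    omega
  by_cases hv : ∀ e ∈ E, v ∉ e
  · obtain ⟨S, hS, hS'⟩ := hL.exists_four_le_of_isolated hV hv
    have := hlow S hS'
    omega
  · push Not at hv
    obtain ⟨e, he, hve⟩ := hv
    obtain ⟨x, y, hs, -⟩ := exists_tri_of_mem hL.uniform he hve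
    obtain ⟨z, hz⟩ := hL.exists_four_le_of_special hV hs
    have := hlow {z} (by simpa using hz)
    have hpos : 0 < (E.filter fun e => v ∈ e).card :=
      Finset.card_pos.2 ⟨e, Finset.mem_filter.2 ⟨he, hve⟩⟩
    rw [Finset.card_singleton] at this
    omega

end UpperDegree

section Saturation

variable {E : Finset (Finset V)} {u v w x y z a b c d : V} {p q r s t f g h : Finset V}

theorem GoodPair.symm (h : GoodPair E x y) : GoodPair E y x := by
  obtain ⟨a, b, h1, h2, h3, h4, h5, h6, p, q, r, s, t, k1, k2, k3, k4, k5, k6, hinc⟩ := h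
  have hf : Five E x y a b p q r s t := ⟨⟨h1, h2, h3, h4, h5, h6⟩, ⟨k1, k2, k3, k4, k5⟩, k6, hinc⟩
  obtain ⟨⟨h1, h2, h3, h4, h5, h6⟩, ⟨k1, k2, k3, k4, k5⟩, k6, hinc⟩ := hf.swap_left
  exact ⟨a, b, h1, h2, h3, h4, h5, h6, _, _, _, _, _, k1, k2, k3, k4, k5, k6, hinc⟩

theorem Five.goodPair (h : Five E x y a b p q r s t) : GoodPair E x y := by
  obtain ⟨⟨h1, h2, h3, h4, h5, h6⟩, ⟨k1, k2, k3, k4, k5⟩, k6, hinc⟩ := h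
  exact ⟨a, b, h1, h2, h3, h4, h5, h6, _, _, _, _, _, k1, k2, k3, k4, k5, k6, hinc⟩

theorem GoodPair.isBergeK4_insert (h : GoodPair E x y) (hf : f ∉ E) (hx : x ∈ f) (hy : y ∈ f) :
    IsBergeK4 (insert f E) := by
  obtain ⟨a, b, h1, h2, h3, h4, h5, h6, p, q, r, s, t, k1, k2, k3, k4, k5, k6, hinc⟩ := h
  have hne : f ∉ [p, q, r, s, t] := by
    simp only [List.mem_cons, List.not_mem_nil, or_false]
    rintro (rfl | rfl | rfl | rfl | rfl) <;> contradiction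
  have hm := fun {e} => Finset.mem_insert_of_mem (s := E) (a := e) (b := f)
  exact ⟨x, y, a, b, h1, h2, h3, h4, h5, h6, f, p, q, r, s, t, Finset.mem_insert_self _ _, hm k1,
    hm k2, hm k3, hm k4, hm k5, List.nodup_cons.2 ⟨hne, k6⟩, hx, hy, hinc⟩

/-- If a new hyperedge `f` completes a Berge-K4, then it covers a pair that was good before. -/
theorem exists_goodPair_of_insert (hfree : ¬ IsBergeK4 E) (h : IsBergeK4Core (insert f E) a b c d) :
    ∃ x y, x ∈ f ∧ y ∈ f ∧ (x = a ∨ x = b ∨ x = c ∨ x = d) ∧ (y = a ∨ y = b ∨ y = c ∨ y = d) ∧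
      GoodPair E x y := by
  obtain ⟨h1, h2, h3, h4, h5, h6, f₁, f₂, f₃, f₄, f₅, f₆, m1, m2, m3, m4, m5, m6, hn, i1, i2, i3,
    i4, i5, i6, i7, i8, i9, i10, i11, i12⟩ := h
  have hn' := hn
  simp only [List.nodup_cons, List.mem_cons, List.not_mem_nil, or_false, not_or] at hn'
  obtain ⟨⟨n12, n13, n14, n15, n16⟩, ⟨n23, n24, n25, n26⟩, ⟨n34, n35, n36⟩, ⟨n45, n46⟩, n56, -⟩ :=
    hn'
  have hm : ∀ {e}, e ∈ insert f E → e ≠ f → e ∈ E := fun he hef =>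
    (Finset.mem_insert.1 he).resolve_left hef
  by_cases e1 : f₁ = f
  · subst e1
    exact ⟨a, b, i1, i2, by simp, by simp, Five.goodPair (a := c) (b := d) (p := f₂) (q := f₃)
      (r := f₄) (s := f₅) (t := f₆) ⟨⟨h1, h2, h3, h4, h5, h6⟩,
        ⟨hm m2 (Ne.symm n12), hm m3 (Ne.symm n13),
      hm m4 (Ne.symm n14), hm m5 (Ne.symm n15), hm m6 (Ne.symm n16)⟩, (List.nodup_cons.1 hn).2,
      ⟨i3, i4, i5, i6, i7, i8, i9, i10, i11, i12⟩⟩⟩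
  by_cases e2 : f₂ = f
  · subst e2
    exact ⟨a, c, i3, i4, by simp, by simp, Five.goodPair (a := b) (b := d) (p := f₁) (q := f₃)
      (r := f₄) (s := f₆) (t := f₅) ⟨⟨h2, h1, h3, h4.symm, h6, h5⟩, ⟨hm m1 n12, hm m3 (Ne.symm n23),
      hm m4 (Ne.symm n24), hm m6 (Ne.symm n26), hm m5 (Ne.symm n25)⟩, by
        simp only [List.nodup_cons, List.mem_cons, List.not_mem_nil, or_false, not_or]; grind,
      ⟨i1, i2, i5, i6, i8, i7, i11, i12, i9, i10⟩⟩⟩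
  by_cases e3 : f₃ = f
  · subst e3
    exact ⟨a, d, i5, i6, by simp, by simp, Five.goodPair (a := b) (b := c) (p := f₁) (q := f₂)
      (r := f₅) (s := f₆) (t := f₄) ⟨⟨h3, h1, h2, h5.symm, h6.symm, h4⟩, ⟨hm m1 n13, hm m2 n23,
      hm m5 (Ne.symm n35), hm m6 (Ne.symm n36), hm m4 (Ne.symm n34)⟩, by
        simp only [List.nodup_cons, List.mem_cons, List.not_mem_nil, or_false, not_or]; grind,
      ⟨i1, i2, i3, i4, i10, i9, i12, i11, i7, i8⟩⟩⟩
  by_cases e4 : f₄ = f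
  · subst e4
    exact ⟨b, c, i7, i8, by simp, by simp, Five.goodPair (a := a) (b := d) (p := f₁) (q := f₅)
      (r := f₂) (s := f₆) (t := f₃) ⟨⟨h4, h1.symm, h5, h2.symm, h6, h3⟩, ⟨hm m1 n14,
      hm m5 (Ne.symm n45), hm m2 n24, hm m6 (Ne.symm n46), hm m3 n34⟩, by
        simp only [List.nodup_cons, List.mem_cons, List.not_mem_nil, or_false, not_or]; grind,
      ⟨i2, i1, i9, i10, i4, i3, i11, i12, i5, i6⟩⟩⟩
  by_cases e5 : f₅ = f
  · subst e5
    exact ⟨b, d, i9, i10, by simp, by simp, Five.goodPair (a := a) (b := c) (p := f₁) (q := f₄)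
      (r := f₃) (s := f₆) (t := f₂) ⟨⟨h5, h1.symm, h4, h3.symm, h6.symm, h2⟩, ⟨hm m1 n15,
      hm m4 n45, hm m3 n35, hm m6 (Ne.symm n56), hm m2 n25⟩, by
        simp only [List.nodup_cons, List.mem_cons, List.not_mem_nil, or_false, not_or]; grind,
      ⟨i2, i1, i7, i8, i6, i5, i12, i11, i3, i4⟩⟩⟩
  by_cases e6 : f₆ = f
  · subst e6
    exact ⟨c, d, i11, i12, by simp, by simp, Five.goodPair (a := a) (b := b) (p := f₂) (q := f₄)
      (r := f₃) (s := f₅) (t := f₁) ⟨⟨h6, h2.symm, h4.symm, h3.symm, h5.symm, h1⟩, ⟨hm m2 n26,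
      hm m4 n46, hm m3 n36, hm m5 n56, hm m1 n16⟩, by
        simp only [List.nodup_cons, List.mem_cons, List.not_mem_nil, or_false, not_or]; grind,
      ⟨i4, i3, i8, i7, i6, i5, i10, i9, i1, i2⟩⟩⟩
  exact absurd ⟨a, b, c, d, h1, h2, h3, h4, h5, h6, f₁, f₂, f₃, f₄, f₅, f₆, hm m1 e1, hm m2 e2,
    hm m3 e3, hm m4 e4, hm m5 e5, hm m6 e6, hn, i1, i2, i3, i4, i5, i6, i7, i8, i9, i10, i11, i12⟩
    hfree

theorem IsBergeK4Core.exists_three (h : IsBergeK4Core E a b c d)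
    (hx : x = a ∨ x = b ∨ x = c ∨ x = d) :
    ∃ f g h, (f ∈ E ∧ g ∈ E ∧ h ∈ E) ∧ (x ∈ f ∧ x ∈ g ∧ x ∈ h) ∧ f ≠ g ∧ f ≠ h ∧ g ≠ h := by
  obtain ⟨-, -, -, -, -, -, f₁, f₂, f₃, f₄, f₅, f₆, m1, m2, m3, m4, m5, m6, hn, i1, i2, i3,
    i4, i5, i6, i7, i8, i9, i10, i11, i12⟩ := h
  simp only [List.nodup_cons, List.mem_cons, List.not_mem_nil, or_false, not_or] at hn
  obtain ⟨⟨n12, n13, n14, n15, n16⟩, ⟨n23, n24, n25, n26⟩, ⟨n34, n35, n36⟩, ⟨n45, n46⟩, n56, -⟩ :=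
    hn
  rcases hx with rfl | rfl | rfl | rfl
  · exact ⟨f₁, f₂, f₃, ⟨m1, m2, m3⟩, ⟨i1, i3, i5⟩, n12, n13, n23⟩
  · exact ⟨f₁, f₄, f₅, ⟨m1, m4, m5⟩, ⟨i2, i7, i9⟩, n14, n15, n45⟩
  · exact ⟨f₂, f₄, f₆, ⟨m2, m4, m6⟩, ⟨i4, i8, i11⟩, n24, n26, n46⟩
  · exact ⟨f₃, f₅, f₆, ⟨m3, m5, m6⟩, ⟨i6, i10, i12⟩, n35, n36, n56⟩

theorem GoodPair.ne (h : GoodPair E x y) : x ≠ y := by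
  obtain ⟨a, b, h1, -⟩ := h
  exact h1

theorem IsSaturated.lowDegree [Fintype V] (hE : IsSaturated E) (hv : hdeg E v ≤ 1) :
    LowDegree E v := by
  obtain ⟨huni, hfree, hsat⟩ := hE
  have hlow : ∀ e ∈ E, ∀ f ∈ E, v ∈ e → v ∈ f → e = f := fun e he f hf hve hvf =>
    Finset.card_le_one.1 hv e (Finset.mem_filter.2 ⟨he, hve⟩) f (Finset.mem_filter.2 ⟨hf, hvf⟩)
  refine ⟨huni, hfree, hlow, fun x y hx hy hxy hn => ?_⟩
  obtain ⟨a, b, c, d, hc⟩ := hsat _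
    (Finset.card_eq_three.2 ⟨v, x, y, hx.symm, hy.symm, hxy, rfl⟩) hn
  have hcore : ∀ z, (z = a ∨ z = b ∨ z = c ∨ z = d) → z ≠ v := by
    rintro z hz rfl
    obtain ⟨f, g, h, ⟨hf, hg, hh⟩, ⟨kf, kg, kh⟩, hfg, hfh, hgh⟩ := hc.exists_three hz
    rw [Finset.mem_insert] at hf hg hh
    have h1 := hlow f
    have h2 := hlow g
    grind
  obtain ⟨s, t, hs, ht, hs', ht', hgood⟩ := exists_goodPair_of_insert hfree hc
  have h1 := hcore s hs'
  have h2 := hcore t ht'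
  have h3 := hgood.ne
  simp only [Finset.mem_insert, Finset.mem_singleton] at hs ht
  obtain ⟨rfl, rfl⟩ | ⟨rfl, rfl⟩ : s = x ∧ t = y ∨ s = y ∧ t = x := by grind
  · exact hgood
  · exact hgood.symm

end Saturation

section Construction

variable {E : Finset (Finset V)} {u v w x y z a b c d : V} {p q r s t f g h : Finset V}

theorem GoodPair.map {W : Type*} [DecidableEq W] {E' : Finset (Finset W)} (φ : V ↪ W)
    (hE : ∀ e ∈ E, e.map φ ∈ E') (h : GoodPair E x y) : GoodPair E' (φ x) (φ y) := by
  obtain ⟨a, b, h1, h2, h3, h4, h5, h6, p, q, r, s, t, k1, k2, k3, k4, k5, k6, hinc⟩ := h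
  have hn := k6.map (Finset.map_injective φ)
  have hm : ∀ {x : V} {e : Finset V}, φ x ∈ e.map φ ↔ x ∈ e := Finset.mem_map' φ
  refine ⟨φ a, φ b, φ.injective.ne h1, φ.injective.ne h2, φ.injective.ne h3, φ.injective.ne h4,
    φ.injective.ne h5, φ.injective.ne h6, _, _, _, _, _, hE _ k1, hE _ k2, hE _ k3, hE _ k4,
    hE _ k5, hn, ?_⟩
  simpa only [hm]

theorem IsBergeK4.map {W : Type*} [DecidableEq W] {E' : Finset (Finset W)} (φ : V ↪ W)
    (hE : ∀ e ∈ E, e.map φ ∈ E') (h : IsBergeK4 E) : IsBergeK4 E' := by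
  obtain ⟨a, b, c, d, h1, h2, h3, h4, h5, h6, f₁, f₂, f₃, f₄, f₅, f₆, m1, m2, m3, m4, m5, m6, hn,
    hinc⟩ := h
  have hn := hn.map (Finset.map_injective φ)
  have hm : ∀ {x : V} {e : Finset V}, φ x ∈ e.map φ ↔ x ∈ e := Finset.mem_map' φ
  refine ⟨φ a, φ b, φ c, φ d, φ.injective.ne h1, φ.injective.ne h2, φ.injective.ne h3,
    φ.injective.ne h4, φ.injective.ne h5, φ.injective.ne h6, _, _, _, _, _, _, hE _ m1, hE _ m2,
    hE _ m3, hE _ m4, hE _ m5, hE _ m6, hn, ?_⟩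
  simpa only [hm]

theorem IsSaturated.map [Fintype V] {W : Type*} [DecidableEq W] [Fintype W] (φ : V ≃ W)
    (h : IsSaturated E) : IsSaturated (E.map (Finset.mapEmbedding φ.toEmbedding).toEmbedding) := by
  obtain ⟨huni, hfree, hsat⟩ := h
  have hmem : ∀ e, e ∈ E.map (Finset.mapEmbedding φ.toEmbedding).toEmbedding ↔
      e.map φ.symm.toEmbedding ∈ E := by
    intro e
    simp only [Finset.mem_map, RelEmbedding.coe_toEmbedding, Finset.mapEmbedding_apply]
    constructor
    · rintro ⟨f, hf, rfl⟩
      simpa [Finset.map_map] using hf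
    · intro he
      exact ⟨_, he, by simp [Finset.map_map]⟩
  refine ⟨fun e he => ?_, fun hK => hfree ?_, fun e he hne => ?_⟩
  · rw [← huni _ ((hmem e).1 he), Finset.card_map]
  · exact hK.map φ.symm.toEmbedding fun e he => (hmem e).1 he
  · refine (hsat (e.map φ.symm.toEmbedding) (by rw [Finset.card_map, he])
      (fun h => hne ((hmem e).2 h))).map φ.toEmbedding fun f hf => ?_
    rw [Finset.mem_insert] at hf ⊢
    rcases hf with rfl | hf
    · exact .inl (by simp [Finset.map_map])
    · exact .inr ((hmem _).2 (by simpa [Finset.map_map] using hf))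

/-- A hypergraph is Berge-K4-free if at most five of its hyperedges contain two vertices of a set
`S` outside which all degrees are at most two. -/
theorem not_isBergeK4_of_card_le (S : Finset V) (hS : ∀ u, u ∉ S → hdeg E u ≤ 2)
    (hcard : (E.filter fun e => 1 < (e ∩ S).card).card ≤ 5) : ¬ IsBergeK4 E := by
  rintro ⟨a, b, c, d, hc⟩
  have hmem : ∀ x, (x = a ∨ x = b ∨ x = c ∨ x = d) → x ∈ S := by
    intro x hx
    by_contra hxS
    obtain ⟨f, g, h, ⟨hf, hg, hh⟩, ⟨kf, kg, kh⟩, hfg, hfh, hgh⟩ := hc.exists_three hx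
    have : 2 < hdeg E x := Finset.two_lt_card.2 ⟨f, Finset.mem_filter.2 ⟨hf, kf⟩, g,
      Finset.mem_filter.2 ⟨hg, kg⟩, h, Finset.mem_filter.2 ⟨hh, kh⟩, hfg, hfh, hgh⟩
    exact absurd (hS x hxS) (by omega)
  have ha := hmem a (by simp)
  have hb := hmem b (by simp)
  have hc' := hmem c (by simp)
  have hd := hmem d (by simp)
  obtain ⟨h1, h2, h3, h4, h5, h6, f₁, f₂, f₃, f₄, f₅, f₆, m1, m2, m3, m4, m5, m6, hn, i1, i2, i3,
    i4, i5, i6, i7, i8, i9, i10, i11, i12⟩ := hc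
  have key : ∀ {x y e}, x ∈ S → y ∈ S → x ≠ y → e ∈ E → x ∈ e → y ∈ e →
      e ∈ E.filter fun e => 1 < (e ∩ S).card := fun hx hy hxy he hxe hye =>
    Finset.mem_filter.2 ⟨he, Finset.one_lt_card.2 ⟨_, Finset.mem_inter.2 ⟨hxe, hx⟩, _,
      Finset.mem_inter.2 ⟨hye, hy⟩, hxy⟩⟩
  have hsub : [f₁, f₂, f₃, f₄, f₅, f₆].toFinset ⊆ E.filter fun e => 1 < (e ∩ S).card := by
    intro e he
    simp only [List.mem_toFinset, List.mem_cons, List.not_mem_nil, or_false] at he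
    rcases he with rfl | rfl | rfl | rfl | rfl | rfl
    · exact key ha hb h1 m1 i1 i2
    · exact key ha hc' h2 m2 i3 i4
    · exact key ha hd h3 m3 i5 i6
    · exact key hb hc' h4 m4 i7 i8
    · exact key hb hd h5 m5 i9 i10
    · exact key hc' hd h6 m6 i11 i12
  have h6 := Finset.card_le_card hsub
  rw [List.toFinset_card_of_nodup hn] at h6
  simp only [List.length_cons, List.length_nil] at h6
  omega

/-- The requirements on a small hypergraph with distinguished vertices `a, b` under which it stays
saturated after attaching pairs of new vertices to `a` and `b`. -/
structure Gadget (G : Finset (Finset V)) (a b : V) (S : Finset V) : Prop where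
  ne : a ≠ b
  uniform : Is3Uniform G
  mem : a ∈ S ∧ b ∈ S
  light : ∀ u, u ∉ S → hdeg G u ≤ 2
  heavy : (G.filter fun e => 1 < (e ∩ S).card).card ≤ 5
  good : GoodPair G a b
  join : ∃ r ∈ G, a ∈ r ∧ b ∈ r
  star : ∀ u, u ≠ a → u ≠ b → ∃ p q r, (p ∈ G ∧ q ∈ G ∧ r ∈ G) ∧ (p ≠ q ∧ p ≠ r ∧ q ≠ r) ∧
    u ∈ p ∧ a ∈ p ∧ u ∈ q ∧ b ∈ q ∧ a ∈ r ∧ b ∈ r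
  saturated : ∀ e, e.card = 3 → e ∉ G → ∃ x y, x ∈ e ∧ y ∈ e ∧ GoodPair G x y

/-- The hyperedge consisting of the two new vertices with index `j` and the old vertex `c`. -/
def attachEdge {m : ℕ} (c : V) (j : Fin m) : Finset (V ⊕ (Fin m × Bool)) :=
  {.inr (j, false), .inr (j, true), .inl c}

/-- Attach `m` pairs of new vertices to both `a` and `b`. -/
def attach (G : Finset (Finset V)) (a b : V) (m : ℕ) : Finset (Finset (V ⊕ (Fin m × Bool))) :=
  G.map (Finset.mapEmbedding Function.Embedding.inl).toEmbedding ∪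
    (Finset.univ.image (attachEdge a) ∪ Finset.univ.image (attachEdge b))

variable {G : Finset (Finset V)} {S : Finset V} {m : ℕ}

theorem mem_attach {e : Finset (V ⊕ (Fin m × Bool))} : e ∈ attach G a b m ↔
    (∃ g ∈ G, g.map .inl = e) ∨ (∃ j, attachEdge a j = e) ∨ ∃ j, attachEdge b j = e := by
  simp [attach]

theorem map_inl_mem_attach {e : Finset V} (he : e ∈ G) : e.map .inl ∈ attach G a b m :=
  mem_attach.2 (.inl ⟨e, he, rfl⟩)

theorem attachEdge_mem (j : Fin m) :
    attachEdge a j ∈ attach G a b m ∧ attachEdge b j ∈ attach G a b m :=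
  ⟨mem_attach.2 (.inr (.inl ⟨j, rfl⟩)), mem_attach.2 (.inr (.inr ⟨j, rfl⟩))⟩

theorem inr_mem_attachEdge {c : V} {j i : Fin m} {β : Bool} :
    .inr (i, β) ∈ attachEdge c j ↔ i = j := by
  cases β <;> simp [attachEdge]

theorem inl_mem_attachEdge {c : V} {j : Fin m} : .inl x ∈ attachEdge c j ↔ x = c := by
  simp [attachEdge]

theorem inl_mem_map {e : Finset V} :
    (.inl x : V ⊕ (Fin m × Bool)) ∈ e.map .inl ↔ x ∈ e := by
  simp

theorem inr_not_mem_map {e : Finset V} {j : Fin m × Bool} :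
    (.inr j : V ⊕ (Fin m × Bool)) ∉ e.map .inl := by
  simp

theorem attachEdge_ne_map {c : V} {j : Fin m} {e : Finset V} : attachEdge c j ≠ e.map .inl :=
  fun h => inr_not_mem_map (h ▸ inr_mem_attachEdge.2 rfl : Sum.inr (j, true) ∈ e.map .inl)

theorem attachEdge_ne {i j : Fin m} (h : i ≠ j) : attachEdge a i ≠ attachEdge b j := fun he =>
  h (inr_mem_attachEdge.1 (he ▸ inr_mem_attachEdge.2 rfl : Sum.inr (i, true) ∈ attachEdge b j))

theorem attachEdge_ne' (hab : a ≠ b) {i j : Fin m} : attachEdge a i ≠ attachEdge b j := fun he =>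
  hab (inl_mem_attachEdge.1 (he ▸ inl_mem_attachEdge.2 rfl : Sum.inl a ∈ attachEdge b j))

theorem card_attach_le : (attach G a b m).card ≤ G.card + 2 * m := by
  refine (Finset.card_union_le _ _).trans ?_
  rw [Finset.card_map]
  have h1 := Finset.card_union_le (Finset.univ.image (attachEdge (m := m) a))
    (Finset.univ.image (attachEdge b))
  have h2 := Finset.card_image_le (s := Finset.univ) (f := attachEdge (m := m) a)
  have h3 := Finset.card_image_le (s := Finset.univ) (f := attachEdge (m := m) b)
  rw [Finset.card_fin] at h2 h3
  omega

theorem Gadget.goodPair_inr (hG : Gadget G a b S) {i j : Fin m} (hij : i ≠ j) (β γ : Bool) :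
    GoodPair (attach G a b m) (.inr (i, β)) (.inr (j, γ)) := by
  obtain ⟨r, hr, har, hbr⟩ := hG.join
  refine Five.goodPair (a := .inl a) (b := .inl b) (p := attachEdge a i) (q := attachEdge b i)
    (r := attachEdge a j) (s := attachEdge b j) (t := r.map .inl) ⟨?_, ⟨(attachEdge_mem _).1,
    (attachEdge_mem _).2, (attachEdge_mem _).1, (attachEdge_mem _).2, map_inl_mem_attach hr⟩, ?_,
    ?_⟩
  · simp [hG.ne, hij]
  · simp only [List.nodup_cons, List.mem_cons, List.not_mem_nil, or_false, not_or,
      List.nodup_nil, not_false_eq_true, and_true]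
    exact ⟨⟨attachEdge_ne' hG.ne, attachEdge_ne hij, attachEdge_ne hij, attachEdge_ne_map⟩,
      ⟨attachEdge_ne hij, attachEdge_ne hij, attachEdge_ne_map⟩,
      ⟨attachEdge_ne' hG.ne, attachEdge_ne_map⟩, attachEdge_ne_map⟩
  · simp only [inr_mem_attachEdge, inl_mem_attachEdge, inl_mem_map]
    tauto

theorem Gadget.goodPair_inl (hG : Gadget G a b S) (j : Fin m) (β : Bool) (hxa : x ≠ a)
    (hxb : x ≠ b) : GoodPair (attach G a b m) (.inr (j, β)) (.inl x) := by
  obtain ⟨p, q, r, ⟨hp, hq, hr⟩, ⟨hpq, hpr, hqr⟩, hinc⟩ := hG.star x hxa hxb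
  have hinj := Finset.map_injective (Function.Embedding.inl (α := V) (β := Fin m × Bool))
  refine Five.goodPair (a := .inl a) (b := .inl b) (p := attachEdge a j) (q := attachEdge b j)
    (r := p.map .inl) (s := q.map .inl) (t := r.map .inl) ⟨?_, ⟨(attachEdge_mem _).1,
    (attachEdge_mem _).2, map_inl_mem_attach hp, map_inl_mem_attach hq, map_inl_mem_attach hr⟩, ?_,
    ?_⟩
  · simp [hG.ne, hxa, hxb]
  · simp only [List.nodup_cons, List.mem_cons, List.not_mem_nil, or_false, not_or,
      List.nodup_nil, not_false_eq_true, and_true]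
    exact ⟨⟨attachEdge_ne' hG.ne, attachEdge_ne_map, attachEdge_ne_map, attachEdge_ne_map⟩,
      ⟨attachEdge_ne_map, attachEdge_ne_map, attachEdge_ne_map⟩,
      ⟨hinj.ne hpq, hinj.ne hpr⟩, hinj.ne hqr⟩
  · simp only [inr_mem_attachEdge, inl_mem_attachEdge, inl_mem_map]
    tauto

theorem Gadget.exists_goodPair (hG : Gadget G a b S) {e : Finset (V ⊕ (Fin m × Bool))}
    (he : e.card = 3) (hne : e ∉ attach G a b m) :
    ∃ x y, x ∈ e ∧ y ∈ e ∧ GoodPair (attach G a b m) x y := by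
  by_contra! hcon
  by_cases hinl : ∀ j, .inr j ∉ e
  · obtain ⟨g, rfl⟩ : ∃ g : Finset V, g.map .inl = e := by
      refine ⟨e.toLeft, ?_⟩
      ext (x | j)
      · simp
      · simpa using hinl j
    rw [Finset.card_map] at he
    obtain ⟨x, y, hx, hy, hxy⟩ := hG.saturated g he fun hg => hne (map_inl_mem_attach hg)
    exact hcon (.inl x) (.inl y) (by simpa) (by simpa)
      (hxy.map Function.Embedding.inl fun _ => map_inl_mem_attach)
  push Not at hinl
  obtain ⟨⟨j, β⟩, hj⟩ := hinl
  have h1 : ∀ i γ, .inr (i, γ) ∈ e → i = j := by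
    intro i γ hi
    by_contra hij
    exact hcon _ _ hi hj (hG.goodPair_inr hij γ β)
  have h2 : ∀ x, .inl x ∈ e → x = a ∨ x = b := by
    intro x hx
    by_contra! hxab
    exact hcon _ _ hj hx (hG.goodPair_inl j β hxab.1 hxab.2)
  have h3 : ¬ (.inl a ∈ e ∧ .inl b ∈ e) := fun h =>
    hcon _ _ h.1 h.2 (hG.good.map Function.Embedding.inl fun _ => map_inl_mem_attach)
  have h4 : ∀ c : V, (∀ x, .inl x ∈ e → x = c) → e = attachEdge c j := by
    intro c hc
    apply Finset.eq_of_subset_of_card_le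
    · rintro (x | ⟨i, γ⟩) hx
      · exact inl_mem_attachEdge.2 (hc x hx)
      · exact inr_mem_attachEdge.2 (h1 i γ hx)
    · rw [he]
      exact Finset.card_le_three
  by_cases ha : .inl a ∈ e
  · have := h4 a fun x hx => (h2 x hx).resolve_right (by rintro rfl; exact h3 ⟨ha, hx⟩)
    exact hne (this ▸ (attachEdge_mem j).1)
  · have := h4 b fun x hx => (h2 x hx).resolve_left (by rintro rfl; exact ha hx)
    exact hne (this ▸ (attachEdge_mem j).2)

theorem Gadget.isSaturated (hG : Gadget G a b S) [Fintype V] : IsSaturated (attach G a b m) := by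
  refine ⟨?_, not_isBergeK4_of_card_le (S.map .inl) ?_ ?_, fun e he hne => ?_⟩
  · intro e he
    rcases mem_attach.1 he with ⟨g, hg, rfl⟩ | ⟨j, rfl⟩ | ⟨j, rfl⟩
    · rw [Finset.card_map, hG.uniform g hg]
    all_goals exact Finset.card_eq_three.2 ⟨_, _, _, by simp, by simp, by simp, rfl⟩
  · rintro (x | ⟨i, β⟩) hx
    · rw [inl_mem_map] at hx
      refine le_trans ?_ (hG.light x hx)
      rw [hdeg, hdeg, ← Finset.card_map (Finset.mapEmbedding (Function.Embedding.inl
        (α := V) (β := Fin m × Bool))).toEmbedding]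
      refine Finset.card_le_card fun e he => ?_
      rw [Finset.mem_filter] at he
      rcases mem_attach.1 he.1 with ⟨g, hg, rfl⟩ | ⟨j, rfl⟩ | ⟨j, rfl⟩
      · exact Finset.mem_map.2 ⟨g, Finset.mem_filter.2 ⟨hg, inl_mem_map.1 he.2⟩, rfl⟩
      · exact absurd (inl_mem_attachEdge.1 he.2) (by rintro rfl; exact hx hG.mem.1)
      · exact absurd (inl_mem_attachEdge.1 he.2) (by rintro rfl; exact hx hG.mem.2)
    · refine le_trans (Finset.card_le_card fun e he => ?_)
        (Finset.card_le_two (a := attachEdge a i) (b := attachEdge b i))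
      rw [Finset.mem_filter] at he
      rw [Finset.mem_insert, Finset.mem_singleton]
      rcases mem_attach.1 he.1 with ⟨g, hg, rfl⟩ | ⟨j, rfl⟩ | ⟨j, rfl⟩
      · exact absurd he.2 inr_not_mem_map
      · exact .inl (by rw [inr_mem_attachEdge.1 he.2])
      · exact .inr (by rw [inr_mem_attachEdge.1 he.2])
  · refine le_trans ?_ hG.heavy
    rw [← Finset.card_map (Finset.mapEmbedding (Function.Embedding.inl
        (α := V) (β := Fin m × Bool))).toEmbedding]
    have hsmall : ∀ (c : V) (j : Fin m), ¬ 1 < (attachEdge c j ∩ S.map .inl).card := by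
      intro c j
      rw [not_lt, Finset.card_le_one]
      have hone : ∀ x ∈ attachEdge c j ∩ S.map .inl, x = .inl c := by
        rintro (x | i) hx <;> rw [Finset.mem_inter] at hx
        · rw [inl_mem_attachEdge.1 hx.1]
        · exact absurd hx.2 inr_not_mem_map
      intro x hx y hy
      rw [hone x hx, hone y hy]
    refine Finset.card_le_card fun e he => ?_
    rw [Finset.mem_filter] at he
    rcases mem_attach.1 he.1 with ⟨g, hg, rfl⟩ | ⟨j, rfl⟩ | ⟨j, rfl⟩
    · refine Finset.mem_map.2 ⟨g, Finset.mem_filter.2 ⟨hg, ?_⟩, rfl⟩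
      have := he.2
      rwa [← Finset.map_inter, Finset.card_map] at this
    · exact absurd he.2 (hsmall a j)
    · exact absurd he.2 (hsmall b j)
  · obtain ⟨x, y, hx, hy, hxy⟩ := hG.exists_goodPair he hne
    exact hxy.isBergeK4_insert hne hx hy

theorem Gadget.exists_saturated {W : Type*} [DecidableEq W] [Fintype W] [Fintype V]
    (hG : Gadget G a b S) (hcard : G.card ≤ Fintype.card V)
    (hW : Fintype.card W = Fintype.card V + 2 * m) :
    ∃ E : Finset (Finset W), IsSaturated E ∧ E.card ≤ Fintype.card W := by
  have φ : V ⊕ (Fin m × Bool) ≃ W := by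
    refine Fintype.equivOfCardEq ?_
    rw [hW, Fintype.card_sum, Fintype.card_prod, Fintype.card_fin, Fintype.card_bool, mul_comm]
  refine ⟨_, hG.isSaturated.map φ, ?_⟩
  rw [Finset.card_map, hW]
  exact card_attach_le.trans (by omega)

end Construction

theorem gadget_five : Gadget ({{0, 1, 2}, {0, 1, 3}, {0, 2, 4}, {1, 3, 4}, {2, 3, 4}} :
    Finset (Finset (Fin 5))) 0 1 Finset.univ where
  ne := by decide
  uniform := by unfold Is3Uniform; decide
  mem := by decide
  light u hu := absurd (Finset.mem_univ u) hu
  heavy := by decide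
  good := ⟨2, 3, by decide, by decide, by decide, by decide, by decide, by decide,
    {0, 2, 4}, {0, 1, 3}, {0, 1, 2}, {1, 3, 4}, {2, 3, 4}, by decide⟩
  join := ⟨{0, 1, 2}, by decide⟩
  star u h1 h2 := by
    have : u = 2 ∨ u = 3 ∨ u = 4 := by omega
    rcases this with rfl | rfl | rfl
    · exact ⟨{0, 2, 4}, {0, 1, 2}, {0, 1, 3}, by decide⟩
    · exact ⟨{0, 1, 3}, {1, 3, 4}, {0, 1, 2}, by decide⟩
    · exact ⟨{0, 2, 4}, {1, 3, 4}, {0, 1, 2}, by decide⟩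
  saturated e he hne := by
    have key : ∀ e : Finset (Fin 5), e.card = 3 → e ∉ ({{0, 1, 2}, {0, 1, 3}, {0, 2, 4},
      {1, 3, 4}, {2, 3, 4}} : Finset (Finset (Fin 5))) → (0 ∈ e ∧ 1 ∈ e) ∨ (0 ∈ e ∧ 3 ∈ e) ∨
        (1 ∈ e ∧ 2 ∈ e) := by decide
    rcases key e he hne with h | h | h
    · exact ⟨_, _, h.1, h.2, 2, 3, by decide, by decide, by decide, by decide, by decide,
        by decide, {0, 2, 4}, {0, 1, 3}, {0, 1, 2}, {1, 3, 4}, {2, 3, 4}, by decide⟩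
    · exact ⟨_, _, h.1, h.2, 1, 2, by decide, by decide, by decide, by decide, by decide,
        by decide, {0, 1, 3}, {0, 2, 4}, {1, 3, 4}, {2, 3, 4}, {0, 1, 2}, by decide⟩
    · exact ⟨_, _, h.1, h.2, 0, 3, by decide, by decide, by decide, by decide, by decide,
        by decide, {0, 1, 2}, {1, 3, 4}, {0, 2, 4}, {2, 3, 4}, {0, 1, 3}, by decide⟩

theorem gadget_six : Gadget ({{0, 1, 2}, {0, 1, 3}, {0, 2, 3}, {0, 2, 4}, {0, 3, 5}, {1, 4, 5}} :
    Finset (Finset (Fin 6))) 0 1 {0, 1, 2, 3} where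
  ne := by decide
  uniform := by unfold Is3Uniform; decide
  mem := by decide
  light := by decide
  heavy := by decide
  good := ⟨2, 3, by decide, by decide, by decide, by decide, by decide, by decide,
    {0, 2, 4}, {0, 3, 5}, {0, 1, 2}, {0, 1, 3}, {0, 2, 3}, by decide⟩
  join := ⟨{0, 1, 2}, by decide⟩
  star u h1 h2 := by
    have : u = 2 ∨ u = 3 ∨ u = 4 ∨ u = 5 := by omega
    rcases this with rfl | rfl | rfl | rfl
    · exact ⟨{0, 2, 3}, {0, 1, 2}, {0, 1, 3}, by decide⟩
    · exact ⟨{0, 2, 3}, {0, 1, 3}, {0, 1, 2}, by decide⟩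
    · exact ⟨{0, 2, 4}, {1, 4, 5}, {0, 1, 2}, by decide⟩
    · exact ⟨{0, 3, 5}, {1, 4, 5}, {0, 1, 2}, by decide⟩
  saturated e he hne := by
    have key : ∀ e : Finset (Fin 6), e.card = 3 → e ∉ ({{0, 1, 2}, {0, 1, 3}, {0, 2, 3},
      {0, 2, 4}, {0, 3, 5}, {1, 4, 5}} : Finset (Finset (Fin 6))) → (0 ∈ e ∧ 1 ∈ e) ∨
        (0 ∈ e ∧ 4 ∈ e) ∨ (1 ∈ e ∧ 2 ∈ e) ∨ (1 ∈ e ∧ 3 ∈ e) ∨ (2 ∈ e ∧ 5 ∈ e) ∨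
        (3 ∈ e ∧ 4 ∈ e) := by decide
    rcases key e he hne with h | h | h | h | h | h
    · exact ⟨_, _, h.1, h.2, 2, 3, by decide, by decide, by decide, by decide, by decide,
        by decide, {0, 2, 4}, {0, 3, 5}, {0, 1, 2}, {0, 1, 3}, {0, 2, 3}, by decide⟩
    · exact ⟨_, _, h.1, h.2, 1, 2, by decide, by decide, by decide, by decide, by decide,
        by decide, {0, 1, 3}, {0, 2, 3}, {1, 4, 5}, {0, 2, 4}, {0, 1, 2}, by decide⟩
    · exact ⟨_, _, h.1, h.2, 0, 3, by decide, by decide, by decide, by decide, by decide,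
        by decide, {0, 1, 2}, {0, 1, 3}, {0, 2, 4}, {0, 2, 3}, {0, 3, 5}, by decide⟩
    · exact ⟨_, _, h.1, h.2, 0, 2, by decide, by decide, by decide, by decide, by decide,
        by decide, {0, 1, 3}, {0, 1, 2}, {0, 3, 5}, {0, 2, 3}, {0, 2, 4}, by decide⟩
    · exact ⟨_, _, h.1, h.2, 0, 1, by decide, by decide, by decide, by decide, by decide,
        by decide, {0, 2, 3}, {0, 1, 2}, {0, 3, 5}, {1, 4, 5}, {0, 1, 3}, by decide⟩
    · exact ⟨_, _, h.1, h.2, 0, 1, by decide, by decide, by decide, by decide, by decide,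
        by decide, {0, 2, 3}, {0, 1, 3}, {0, 2, 4}, {1, 4, 5}, {0, 1, 2}, by decide⟩

theorem exists_saturated_card_le [Fintype V] (hV : 5 ≤ Fintype.card V) :
    ∃ E : Finset (Finset V), IsSaturated E ∧ E.card ≤ Fintype.card V := by
  rcases Nat.even_or_odd' (Fintype.card V) with ⟨m, hm | hm⟩
  · exact gadget_six.exists_saturated (m := m - 3) (by decide) (by rw [Fintype.card_fin]; omega)
  · exact gadget_five.exists_saturated (m := m - 2) (by decide) (by rw [Fintype.card_fin]; omega)

theorem stmt_12 (n : ℕ) (hn : 7 ≤ n) (E : Finset (Finset (Fin n)))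
    (hsat : IsSaturated E)
    (hmin : ∀ E' : Finset (Finset (Fin n)), IsSaturated E' → E.card ≤ E'.card) :
    ∀ v : Fin n, 2 ≤ hdeg E v := by
  intro v
  by_contra hv
  have hlt := (hsat.lowDegree (v := v) (by omega)).card_lt (by rwa [Fintype.card_fin])
  obtain ⟨E', hE', hcard⟩ := exists_saturated_card_le (V := Fin n) (by rw [Fintype.card_fin]; omega)
  have := hmin E' hE'
  omega
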